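/- Let S be a point set of size q + 2 in PG(2,q), where q is odd and q > 3. Then the number of odd-secants of S is at least (8/5)q. -/

import Mathlib

/-! Common setup: the Desarguesian projective plane `PG(2,q)` over a finite field `F = GF(q)`.
Points are the projective points of `F³`; lines are the 2-dimensional linear subspaces of `F³`,
with incidence given by containment. -/

/-- Points of `PG(2,F)`. -/
abbrev PGPoint (F : Type*) [Field F] := Projectivization F (Fin 3 → F)

/-- Lines of `PG(2,F)`: the 2-dimensional linear subspaces of `F³`. -/
abbrev PGLine (F : Type*) [Field F] := {W : Submodule F (Fin 3 → F) // Module.finrank F W = 2}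

/-- Incidence between a point and a line of `PG(2,F)`. -/
def pgMem {F : Type*} [Field F] (P : PGPoint F) (L : PGLine F) : Prop :=
  P.submodule ≤ L.val

/-- The number of points of the point set `B` lying on the line `L`;
`L` is a *`k`-secant* of `B` if `nsec B L = k`, a *tangent* if `k = 1`,
a *bisecant* if `k = 2` and a *trisecant* if `k = 3`. -/
noncomputable def nsec {F : Type*} [Field F] (B : Set (PGPoint F)) (L : PGLine F) : ℕ :=
  {P ∈ B | pgMem P L}.ncard

/-- A blocking set: a point set meeting every line. -/
def isBlocking {F : Type*} [Field F] (B : Set (PGPoint F)) : Prop :=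
  ∀ L : PGLine F, ∃ P ∈ B, pgMem P L

/-- A minimal blocking set: every point is essential. -/
def isMinimalBlocking {F : Type*} [Field F] (B : Set (PGPoint F)) : Prop :=
  isBlocking B ∧ ∀ P ∈ B, ¬ isBlocking (B \ {P})

/-- `B` is a blocking set of Rédei type with Rédei line `ℓ`: a blocking set of size
`q + N ≤ 2q` such that `ℓ` meets `B` in exactly `N = |B| − q` points. -/
def isRedeiWithLine {F : Type*} [Field F] (q : ℕ) (B : Set (PGPoint F)) (ℓ : PGLine F) : Prop :=
  isBlocking B ∧ B.ncard ≤ 2 * q ∧ nsec B ℓ + q = B.ncard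

/-- A semioval: through each of its points there passes exactly one tangent. -/
def isSemioval {F : Type*} [Field F] (S : Set (PGPoint F)) : Prop :=
  ∀ P ∈ S, ∃! t : PGLine F, pgMem P t ∧ nsec S t = 1

namespace OddSecants

open Finset Module
open scoped Classical

variable {F : Type*} [Field F]

/-! ### Incidence -/

lemma pgMem_iff {P : PGPoint F} {L : PGLine F} : pgMem P L ↔ P.rep ∈ L.val := by
  rw [pgMem, Projectivization.submodule_eq, Submodule.span_singleton_le_iff_mem]

lemma pgMem_mk {v : Fin 3 → F} (hv : v ≠ 0) {L : PGLine F} :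
    pgMem (Projectivization.mk F v hv) L ↔ v ∈ L.val := by
  rw [pgMem, Projectivization.submodule_mk, Submodule.span_singleton_le_iff_mem]

lemma linearIndependent_rep_pair {P Q : PGPoint F} (h : P ≠ Q) :
    LinearIndependent F ![P.rep, Q.rep] := by
  have := (Projectivization.independent_pair_iff_ne P Q).2 h
  rw [Projectivization.independent_iff] at this
  have h' : ![P.rep, Q.rep] = Projectivization.rep ∘ ![P, Q] := by
    ext i j
    fin_cases i <;> rfl
  rw [h']
  exact this

lemma span_pair_eq {P Q : PGPoint F} (h : P ≠ Q) {L : PGLine F} (hP : pgMem P L)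
    (hQ : pgMem Q L) : Submodule.span F (Set.range ![P.rep, Q.rep]) = L.val := by
  apply Submodule.eq_of_le_of_finrank_eq
  · rw [Submodule.span_le]
    rintro _ ⟨i, rfl⟩
    fin_cases i
    · exact pgMem_iff.1 hP
    · exact pgMem_iff.1 hQ
  · rw [finrank_span_eq_card (linearIndependent_rep_pair h), L.2]
    rfl

lemma line_unique {P Q : PGPoint F} (h : P ≠ Q) {L M : PGLine F} (hPL : pgMem P L)
    (hQL : pgMem Q L) (hPM : pgMem P M) (hQM : pgMem Q M) : L = M :=
  Subtype.ext ((span_pair_eq h hPL hQL).symm.trans (span_pair_eq h hPM hQM))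

lemma exists_line {P Q : PGPoint F} (h : P ≠ Q) : ∃ L : PGLine F, pgMem P L ∧ pgMem Q L := by
  refine ⟨⟨Submodule.span F (Set.range ![P.rep, Q.rep]), ?_⟩, ?_, ?_⟩
  · rw [finrank_span_eq_card (linearIndependent_rep_pair h)]
    rfl
  · exact pgMem_iff.2 (Submodule.subset_span ⟨0, rfl⟩)
  · exact pgMem_iff.2 (Submodule.subset_span ⟨1, rfl⟩)

lemma exists_meet (L M : PGLine F) : ∃ O : PGPoint F, pgMem O L ∧ pgMem O M := by
  have h := Submodule.finrank_sup_add_finrank_inf_eq L.val M.val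
  have h3 := Submodule.finrank_le (L.val ⊔ M.val)
  rw [L.2, M.2] at h
  rw [finrank_fin_fun] at h3
  have hpos : L.val ⊓ M.val ≠ ⊥ := by
    intro h0
    rw [h0, finrank_bot] at h
    omega
  obtain ⟨v, hv, hv0⟩ := Submodule.exists_mem_ne_zero_of_ne_bot hpos
  exact ⟨Projectivization.mk F v hv0, (pgMem_mk hv0).2 hv.1, (pgMem_mk hv0).2 hv.2⟩

/-- A coordinate frame: a linear change of coordinates of `F³`. -/
abbrev Frame (F : Type*) [Field F] := (Fin 3 → F) ≃ₗ[F] (Fin 3 → F)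

/-- The line `L` has equation `a x + b y + c z = 0` in the frame `e`. -/
def HasEq (e : Frame F) (L : PGLine F) (a b c : F) : Prop :=
  ∀ v, v ∈ L.val ↔ a * e v 0 + b * e v 1 + c * e v 2 = 0

lemma HasEq.mem {e : Frame F} {L : PGLine F} {a b c : F} (h : HasEq e L a b c) {P : PGPoint F} :
    pgMem P L ↔ a * e P.rep 0 + b * e P.rep 1 + c * e P.rep 2 = 0 :=
  pgMem_iff.trans (h _)

lemma HasEq.unique {e : Frame F} {L M : PGLine F} {a b c : F} (h : HasEq e L a b c)
    (h' : HasEq e M a b c) : L = M :=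
  Subtype.ext (Submodule.ext fun v => (h v).trans (h' v).symm)

/-- The linear form `a x + b y + c z` in the frame `e`. -/
def form (e : Frame F) (a b c : F) : (Fin 3 → F) →ₗ[F] F :=
  (a • LinearMap.proj 0 + b • LinearMap.proj 1 + c • LinearMap.proj 2) ∘ₗ e.toLinearMap

@[simp] lemma form_apply (e : Frame F) (a b c : F) (v : Fin 3 → F) :
    form e a b c v = a * e v 0 + b * e v 1 + c * e v 2 := by
  simp [form]

lemma finrank_ker_of_ne_zero {f : (Fin 3 → F) →ₗ[F] F} (hf : f ≠ 0) :
    finrank F (LinearMap.ker f) = 2 := by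
  have h := LinearMap.finrank_range_add_finrank_ker f
  rw [LinearMap.range_eq_top.2 (LinearMap.surjective hf), finrank_top, finrank_self,
    finrank_fin_fun] at h
  omega

lemma exists_hasEq (e : Frame F) (a b c : F) (h : a ≠ 0 ∨ b ≠ 0 ∨ c ≠ 0) :
    ∃ L : PGLine F, HasEq e L a b c := by
  have hf : form e a b c ≠ 0 := by
    intro h0
    have h1 (w : Fin 3 → F) : a * w 0 + b * w 1 + c * w 2 = 0 := by
      have := LinearMap.congr_fun h0 (e.symm w)
      simpa using this
    have ha := h1 ![1, 0, 0]
    have hb := h1 ![0, 1, 0]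
    have hc := h1 ![0, 0, 1]
    simp at ha hb hc
    simp [ha, hb, hc] at h
  exact ⟨⟨LinearMap.ker (form e a b c), finrank_ker_of_ne_zero hf⟩, fun v => by simp⟩

lemma hasEq_exists (e : Frame F) (L : PGLine F) :
    ∃ a b c : F, (a ≠ 0 ∨ b ≠ 0 ∨ c ≠ 0) ∧ HasEq e L a b c := by
  have hlt : L.val < ⊤ := by
    rw [lt_top_iff_ne_top]
    intro h
    have := L.2
    rw [h, finrank_top, finrank_fin_fun] at this
    omega
  obtain ⟨f, hf, hle⟩ := Submodule.exists_le_ker_of_lt_top _ hlt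
  have hker : L.val = LinearMap.ker f :=
    Submodule.eq_of_le_of_finrank_eq hle (L.2.trans (finrank_ker_of_ne_zero hf).symm)
  have hform : f = form e (f (e.symm ![1, 0, 0])) (f (e.symm ![0, 1, 0]))
      (f (e.symm ![0, 0, 1])) := by
    refine LinearMap.ext fun v => ?_
    obtain ⟨w, rfl⟩ := e.symm.surjective v
    have hw : w = w 0 • ![1, 0, 0] + w 1 • ![0, 1, 0] + w 2 • ![0, 0, 1] := by
      ext i
      fin_cases i <;> simp
    rw [form_apply, LinearEquiv.apply_symm_apply]
    conv_lhs => rw [hw]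
    simp only [map_add, map_smul, smul_eq_mul]
    ring
  refine ⟨f (e.symm ![1, 0, 0]), f (e.symm ![0, 1, 0]), f (e.symm ![0, 0, 1]), ?_, fun v => ?_⟩
  · by_contra! h
    apply hf
    rw [hform, h.1, h.2.1, h.2.2]
    refine LinearMap.ext fun v => ?_
    simp
  · rw [hker, LinearMap.mem_ker]
    conv_lhs => rw [hform]
    rw [form_apply]

lemma linearIndependent_triple {P Q : PGPoint F} (h : P ≠ Q) {L : PGLine F} (hP : pgMem P L)
    (hQ : pgMem Q L) {R : PGPoint F} (hR : ¬ pgMem R L) :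
    LinearIndependent F ![R.rep, P.rep, Q.rep] := by
  rw [show ![R.rep, P.rep, Q.rep] = Fin.cons R.rep ![P.rep, Q.rep] from rfl,
    linearIndependent_finCons]
  refine ⟨linearIndependent_rep_pair h, ?_⟩
  rw [span_pair_eq h hP hQ]
  exact fun h' => hR (pgMem_iff.2 h')

lemma exists_frame {u v w : Fin 3 → F} (h : LinearIndependent F ![u, v, w]) :
    ∃ e : Frame F, e u = ![1, 0, 0] ∧ e v = ![0, 1, 0] ∧ e w = ![0, 0, 1] := by
  let b := basisOfLinearIndependentOfCardEqFinrank h (by simp)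
  have hb (i : Fin 3) : b.equivFun (![u, v, w] i) = Pi.single i 1 := by
    have h1 : b i = ![u, v, w] i := by simp [b]
    rw [← h1]
    ext j
    rw [b.equivFun_self, Pi.single_apply]
    simp [eq_comm]
  refine ⟨b.equivFun, ?_, ?_, ?_⟩
  · refine (hb 0).trans ?_
    ext i; fin_cases i <;> simp
  · refine (hb 1).trans ?_
    ext i; fin_cases i <;> simp
  · refine (hb 2).trans ?_
    ext i; fin_cases i <;> simp

lemma rep_coord_ne_zero (e : Frame F) (P : PGPoint F) :
    e P.rep 0 ≠ 0 ∨ e P.rep 1 ≠ 0 ∨ e P.rep 2 ≠ 0 := by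
  by_contra! h
  apply P.rep_nonzero
  apply e.injective
  rw [map_zero]
  ext i
  fin_cases i
  · exact h.1
  · exact h.2.1
  · exact h.2.2

/-- Proportional coordinate vectors belong to the same point. -/
lemma eq_of_coord_smul (e : Frame F) {P Q : PGPoint F} (t : F)
    (h : ∀ i, e P.rep i = t * e Q.rep i) : P = Q := by
  rw [← P.mk_rep, ← Q.mk_rep, Projectivization.mk_eq_mk_iff']
  refine ⟨t, e.injective ?_⟩
  rw [map_smul]
  ext i
  simp [h i]

/-- Cyclic shift of the coordinates of a frame. -/
def Frame.rotate (e : Frame F) : Frame F :=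
  e.trans (LinearEquiv.funCongrLeft F F (finRotate 3))

@[simp] lemma Frame.rotate_zero (e : Frame F) (v : Fin 3 → F) : e.rotate v 0 = e v 1 := by
  simp [Frame.rotate, LinearEquiv.funCongrLeft_apply, LinearMap.funLeft_apply]

@[simp] lemma Frame.rotate_one (e : Frame F) (v : Fin 3 → F) : e.rotate v 1 = e v 2 := by
  simp [Frame.rotate, LinearEquiv.funCongrLeft_apply, LinearMap.funLeft_apply]

@[simp] lemma Frame.rotate_two (e : Frame F) (v : Fin 3 → F) : e.rotate v 2 = e v 0 := by
  simp [Frame.rotate, LinearEquiv.funCongrLeft_apply, LinearMap.funLeft_apply]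

/-! ### Products over fibres in a finite field -/

section FiniteField

variable {ι κ : Type*}

lemma prod_mul_of_fibers {M : Type*} [CommMonoid M] {s : Finset ι} {f : ι → κ} {T : Finset κ}
    (hT : ∀ i ∈ s, f i ∈ T) {α β : κ} (hα : α ∈ T) (hβ : β ∈ T)
    (h : ∀ c ∈ T, #{i ∈ s | f i = c} + (if c = α then 1 else 0) = 1 + (if c = β then 1 else 0))
    (g : κ → M) : (∏ i ∈ s, g (f i)) * g α = (∏ c ∈ T, g c) * g β := by
  have hpt (a : κ) (ha : a ∈ T) : g a = ∏ c ∈ T, g c ^ (if c = a then 1 else 0) := by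
    simp [pow_ite, ha]
  rw [← Finset.prod_fiberwise_of_maps_to hT, hpt α hα, hpt β hβ, ← Finset.prod_mul_distrib,
    ← Finset.prod_mul_distrib]
  refine Finset.prod_congr rfl fun c hc => ?_
  rw [Finset.prod_congr rfl fun i hi => by rw [(Finset.mem_filter.1 hi).2], Finset.prod_const,
    ← pow_add, h c hc, pow_add, pow_one]

@[to_additive]
lemma prod_of_fibers {M : Type*} [CommMonoid M] {s : Finset ι} {f : ι → κ} {T : Finset κ}
    (hT : ∀ i ∈ s, f i ∈ T) (h : ∀ c ∈ T, #{i ∈ s | f i = c} = 1)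
    (g : κ → M) : ∏ i ∈ s, g (f i) = ∏ c ∈ T, g c := by
  rw [← Finset.prod_fiberwise_of_maps_to hT]
  refine Finset.prod_congr rfl fun c hc => ?_
  obtain ⟨i, hi⟩ := Finset.card_eq_one.1 (h c hc)
  have : f i = c := by
    have := Finset.mem_singleton_self i
    rw [← hi] at this
    exact (Finset.mem_filter.1 this).2
  rw [hi, Finset.prod_singleton, this]

/-- The restriction of `x` to `s` is a bijection onto the nonzero elements of `F`. -/
def BijNonzero (s : Finset ι) (x : ι → F) : Prop :=
  (∀ i ∈ s, x i ≠ 0) ∧ ∀ c, c ≠ 0 → #{i ∈ s | x i = c} = 1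

lemma BijNonzero.injOn {s : Finset ι} {x : ι → F} (h : BijNonzero s x) {i j : ι} (hi : i ∈ s)
    (hj : j ∈ s) (hij : x i = x j) : i = j := by
  obtain ⟨k, hk⟩ := Finset.card_eq_one.1 (h.2 _ (h.1 j hj))
  have hi' : i ∈ ({k} : Finset ι) := hk ▸ Finset.mem_filter.2 ⟨hi, hij⟩
  have hj' : j ∈ ({k} : Finset ι) := hk ▸ Finset.mem_filter.2 ⟨hj, rfl⟩
  rw [Finset.mem_singleton] at hi' hj'
  rw [hi', hj']

variable [Fintype F]

lemma prod_erase_zero : ∏ c ∈ (univ : Finset F).erase 0, c = -1 := by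
  have h := congrArg Units.val (FiniteField.prod_univ_units_id_eq_neg_one (K := F))
  rw [Units.coe_prod, Units.val_neg, Units.val_one] at h
  rw [← h]
  symm
  refine Finset.prod_bij (fun u _ => (u : F)) ?_ ?_ ?_ ?_
  · simp
  · intro u _ v _ h
    exact Units.ext h
  · intro c hc
    exact ⟨Units.mk0 c (Finset.ne_of_mem_erase hc), Finset.mem_univ _, rfl⟩
  · simp

lemma prod_sub_erase (v : F) : ∏ c ∈ (univ : Finset F).erase v, (c - v) = -1 := by
  rw [← prod_erase_zero (F := F)]
  refine Finset.prod_bij (fun c _ => c - v) ?_ ?_ ?_ ?_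
  · simp [sub_eq_zero]
  · intro a _ b _ h
    simpa using h
  · intro c hc
    exact ⟨c + v, by simpa using hc, by simp⟩
  · simp

lemma prod_erase_zero_one : ∏ c ∈ ((univ : Finset F).erase 0).erase 1, c = -1 := by
  rw [← prod_erase_zero (F := F), ← Finset.mul_prod_erase (univ.erase 0) _ (a := 1) (by simp),
    one_mul]

lemma prod_one_sub_erase_zero_one :
    ∏ c ∈ ((univ : Finset F).erase 0).erase 1, (1 - c) = -1 := by
  rw [← prod_erase_zero_one (F := F)]
  refine Finset.prod_bij (fun c _ => 1 - c) ?_ ?_ ?_ ?_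
  · intro c hc
    simp only [Finset.mem_erase, Finset.mem_univ, and_true] at hc ⊢
    refine ⟨fun h => hc.2 ?_, fun h => hc.1 ?_⟩
    · simpa using h
    · exact (sub_eq_zero.1 h).symm
  · intro a _ b _ h
    simpa using h
  · intro c hc
    simp only [Finset.mem_erase, Finset.mem_univ, and_true] at hc
    refine ⟨1 - c, ?_, by simp⟩
    simp only [Finset.mem_erase, Finset.mem_univ, and_true]
    refine ⟨fun h => hc.2 ?_, fun h => hc.1 ?_⟩
    · simpa using h
    · exact (sub_eq_zero.1 h).symm
  · simp

lemma BijNonzero.prod_sub {s : Finset ι} {x : ι → F} (h : BijNonzero s x) {j : ι} (hj : j ∈ s) :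
    (∏ i ∈ s.erase j, (x i - x j)) * x j = 1 := by
  have hT : ∀ i ∈ s.erase j, x i ∈ ((univ : Finset F).erase (x j)).erase 0 := by
    intro i hi
    rw [Finset.mem_erase] at hi
    simp only [Finset.mem_erase, Finset.mem_univ, and_true]
    exact ⟨h.1 i hi.2, fun h' => hi.1 (h.injOn hi.2 hj h')⟩
  have h1 := prod_of_fibers hT (fun c hc => ?_) (fun c => c - x j)
  · have h2 := prod_sub_erase (x j)
    rw [← Finset.mul_prod_erase _ _ (a := 0) (by simpa using (h.1 j hj).symm), ← h1] at h2
    linear_combination -h2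
  · simp only [Finset.mem_erase, Finset.mem_univ, and_true] at hc
    rw [← h.2 c hc.1, Finset.filter_erase, Finset.erase_eq_of_notMem]
    simpa [hj] using hc.2.symm

lemma slope_relations {s : Finset ι} {x y : ι → F} (hx : BijNonzero s x) (hy : BijNonzero s y)
    (hxy : BijNonzero s fun i => x i - y i) {j : ι} (hj : j ∈ s) {α β : F}
    (hα0 : α ≠ 0) (hα1 : α ≠ 1) (hβ0 : β ≠ 0) (hβ1 : β ≠ 1)
    (h : ∀ c, c ≠ 0 → c ≠ 1 → #{i ∈ s.erase j | y i - y j = c * (x i - x j)}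
      + (if c = α then 1 else 0) = 1 + (if c = β then 1 else 0)) :
    β * y j = -(α * x j) ∧ (1 - β) * (x j - y j) = -((1 - α) * x j) := by
  have hx' : ∀ i ∈ s.erase j, x i - x j ≠ 0 := fun i hi => sub_ne_zero.2 fun h' =>
    (Finset.mem_erase.1 hi).1 (hx.injOn (Finset.mem_erase.1 hi).2 hj h')
  have hy' : ∀ i ∈ s.erase j, y i - y j ≠ 0 := fun i hi => sub_ne_zero.2 fun h' =>
    (Finset.mem_erase.1 hi).1 (hy.injOn (Finset.mem_erase.1 hi).2 hj h')
  have hd' : ∀ i ∈ s.erase j, (x i - y i) - (x j - y j) ≠ 0 := fun i hi => sub_ne_zero.2 fun h' =>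
    (Finset.mem_erase.1 hi).1 (hxy.injOn (Finset.mem_erase.1 hi).2 hj h')
  have hT : ∀ i ∈ s.erase j, (y i - y j) / (x i - x j) ∈ ((univ : Finset F).erase 0).erase 1 := by
    intro i hi
    simp only [Finset.mem_erase (s := Finset.erase _ _), Finset.mem_erase (s := univ),
      Finset.mem_univ, and_true]
    refine ⟨fun h1 => hd' i hi ?_, div_ne_zero (hy' i hi) (hx' i hi)⟩
    rw [div_eq_one_iff_eq (hx' i hi)] at h1
    linear_combination -h1
  have hfib : ∀ c ∈ ((univ : Finset F).erase 0).erase 1,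
      #{i ∈ s.erase j | (y i - y j) / (x i - x j) = c}
        + (if c = α then 1 else 0) = 1 + (if c = β then 1 else 0) := by
    intro c hc
    simp only [Finset.mem_erase, Finset.mem_univ, and_true] at hc
    rw [← h c hc.2 hc.1]
    congr 2
    refine Finset.filter_congr fun i hi => ?_
    rw [div_eq_iff (hx' i hi)]
  have hα : α ∈ ((univ : Finset F).erase 0).erase 1 := by simp [hα0, hα1]
  have hβ : β ∈ ((univ : Finset F).erase 0).erase 1 := by simp [hβ0, hβ1]
  have e1 := prod_mul_of_fibers hT hα hβ hfib id
  have e2 := prod_mul_of_fibers hT hα hβ hfib (fun c => 1 - c)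
  simp only [id] at e1
  rw [prod_erase_zero_one, Finset.prod_div_distrib] at e1
  have e3 : ∀ i ∈ s.erase j, 1 - (y i - y j) / (x i - x j)
      = ((x i - y i) - (x j - y j)) / (x i - x j) := by
    intro i hi
    have := hx' i hi
    field_simp
    ring
  rw [prod_one_sub_erase_zero_one, Finset.prod_congr rfl e3, Finset.prod_div_distrib] at e2
  have px := hx.prod_sub hj
  have py := hy.prod_sub hj
  have pd := hxy.prod_sub hj
  have hpx : ∏ i ∈ s.erase j, (x i - x j) ≠ 0 := Finset.prod_ne_zero_iff.2 hx'
  rw [div_mul_eq_mul_div, div_eq_iff hpx] at e1 e2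
  constructor
  · linear_combination (x j * y j) * e1 - α * x j * py - β * y j * px
  · linear_combination (x j * (x j - y j)) * e2 - (1 - α) * x j * pd
      - (1 - β) * (x j - y j) * px

end FiniteField

/-! ### Counting lines through a point -/

lemma nsec_coe (S : Finset (PGPoint F)) (L : PGLine F) :
    nsec (S : Set (PGPoint F)) L = #{P ∈ S | pgMem P L} := by
  rw [nsec, ← Set.ncard_coe_finset]
  congr 1
  ext P
  simp

lemma exists_frame_rep (P : PGPoint F) : ∃ e : Frame F, e P.rep = ![0, 0, 1] := by
  have h1 : LinearIndependent F ![P.rep] := LinearIndependent.of_subsingleton 0 P.rep_nonzero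
  obtain ⟨x, hx⟩ := exists_linearIndependent_cons_of_lt_finrank h1 (by simp)
  obtain ⟨y, hy⟩ := exists_linearIndependent_cons_of_lt_finrank hx (by simp)
  obtain ⟨e, -, -, he⟩ := exists_frame (u := y) (v := x) (w := P.rep) hy
  exact ⟨e, he⟩

lemma one_le_nsec {S : Finset (PGPoint F)} {P : PGPoint F} (hP : P ∈ S) {L : PGLine F}
    (hL : pgMem P L) : 1 ≤ nsec (S : Set (PGPoint F)) L := by
  rw [nsec_coe]
  exact Finset.card_pos.2 ⟨P, by simp [hP, hL]⟩

lemma nsec_eq_card_erase {S : Finset (PGPoint F)} {P : PGPoint F} (hP : P ∈ S) {L : PGLine F}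
    (hL : pgMem P L) :
    nsec (S : Set (PGPoint F)) L = #{Q ∈ S.erase P | pgMem Q L} + 1 := by
  rw [nsec_coe, Finset.filter_erase, Finset.card_erase_add_one (by simp [hP, hL])]

section Counting

variable [Fintype F]

/-- The pencil of lines through `P`. -/
noncomputable def pencil (P : PGPoint F) : Finset (PGLine F) := {L | pgMem P L}

@[simp] lemma mem_pencil {P : PGPoint F} {L : PGLine F} : L ∈ pencil P ↔ pgMem P L := by
  simp [pencil]

lemma card_pencil (P : PGPoint F) : #(pencil P) = Fintype.card F + 1 := by
  obtain ⟨e, he⟩ := exists_frame_rep P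
  let c : Option F → F × F := fun o => o.elim (0, 1) fun t => (1, -t)
  have hc (o : Option F) : (c o).1 ≠ 0 ∨ (c o).2 ≠ 0 ∨ (0 : F) ≠ 0 := by
    cases o <;> simp [c]
  choose l hl using fun o => exists_hasEq e (c o).1 (c o).2 0 (hc o)
  rw [← Fintype.card_option, ← Finset.card_univ, eq_comm]
  refine Finset.card_bij (fun o _ => l o) ?_ ?_ ?_
  · intro o _
    rw [mem_pencil, (hl o).mem, he]
    simp
  · intro o _ o' _ h
    have h1 := hl o
    rw [show l o = l o' from h] at h1
    have key (v : Fin 3 → F) := (h1 (e.symm v)).symm.trans (hl o' (e.symm v))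
    rcases o with _ | t <;> rcases o' with _ | t'
    · rfl
    · simpa [c] using key ![1, 0, 0]
    · simpa [c] using key ![1, 0, 0]
    · have := key ![t, 1, 0]
      simp [c, ← sub_eq_add_neg, sub_eq_zero] at this
      rw [this]
  · intro L hL
    obtain ⟨a, b, d, h0, h⟩ := hasEq_exists e L
    rw [mem_pencil, h.mem, he] at hL
    simp at hL
    subst hL
    by_cases ha : a = 0
    · refine ⟨none, Finset.mem_univ _, (HasEq.unique h fun v => ?_).symm⟩
      have hb : b ≠ 0 := by simpa [ha] using h0
      rw [hl none v]
      simp [c, ha, hb]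
    · refine ⟨some (-b / a), Finset.mem_univ _, (HasEq.unique h fun v => ?_).symm⟩
      rw [hl _ v]
      simp only [c, Option.elim]
      rw [← mul_right_inj' ha, mul_zero]
      field_simp
      simp

lemma sum_nsec {S : Finset (PGPoint F)} {P : PGPoint F} (hP : P ∈ S) :
    ∑ L ∈ pencil P, nsec (S : Set (PGPoint F)) L = #S + Fintype.card F := by
  have h1 : ∑ L ∈ pencil P, #{Q ∈ S.erase P | pgMem Q L}
      = ∑ Q ∈ S.erase P, #{L ∈ pencil P | pgMem Q L} :=
    (Finset.sum_card_bipartiteAbove_eq_sum_card_bipartiteBelow pgMem).symm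
  have h2 : ∀ Q ∈ S.erase P, #{L ∈ pencil P | pgMem Q L} = 1 := by
    intro Q hQ
    obtain ⟨L, hPL, hQL⟩ := exists_line (Finset.ne_of_mem_erase hQ).symm
    rw [Finset.card_eq_one]
    refine ⟨L, Finset.ext fun M => ?_⟩
    simp only [Finset.mem_filter, mem_pencil, Finset.mem_singleton]
    constructor
    · rintro ⟨h, h'⟩
      exact line_unique (Finset.ne_of_mem_erase hQ).symm h h' hPL hQL
    · rintro rfl
      exact ⟨hPL, hQL⟩
  rw [Finset.sum_congr rfl h2, Finset.sum_const, smul_eq_mul, mul_one,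
    Finset.card_erase_of_mem hP] at h1
  rw [Finset.sum_congr rfl fun L hL => nsec_eq_card_erase hP (mem_pencil.1 hL),
    Finset.sum_add_distrib, h1, Finset.sum_const, card_pencil]
  have := Finset.card_pos.2 ⟨P, hP⟩
  simp
  omega

/-- The number of tangents of `S` at `P`. -/
noncomputable def tangents (S : Finset (PGPoint F)) (P : PGPoint F) : ℕ :=
  #{L ∈ pencil P | nsec (S : Set (PGPoint F)) L = 1}

/-- The number of trisecants of `S` at `P`. -/
noncomputable def trisecants (S : Finset (PGPoint F)) (P : PGPoint F) : ℕ :=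
  #{L ∈ pencil P | nsec (S : Set (PGPoint F)) L = 3}

lemma sum_excess {S : Finset (PGPoint F)} (hS : #S = Fintype.card F + 2) {P : PGPoint F}
    (hP : P ∈ S) :
    ∑ L ∈ pencil P, (nsec (S : Set (PGPoint F)) L - 2) = tangents S P := by
  have h1 : ∀ L ∈ pencil P, nsec (S : Set (PGPoint F)) L
      + (if nsec (S : Set (PGPoint F)) L = 1 then 1 else 0)
        = (nsec (S : Set (PGPoint F)) L - 2) + 2 := by
    intro L hL
    have := one_le_nsec hP (mem_pencil.1 hL)
    split_ifs <;> omega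
  have h2 := Finset.sum_congr rfl h1
  rw [Finset.sum_add_distrib, Finset.sum_add_distrib, sum_nsec hP, Finset.sum_const, card_pencil,
    ← Finset.card_filter, hS, smul_eq_mul] at h2
  rw [tangents]
  omega

lemma trisecants_le_tangents {S : Finset (PGPoint F)} (hS : #S = Fintype.card F + 2)
    {P : PGPoint F} (hP : P ∈ S) : trisecants S P ≤ tangents S P := by
  rw [← sum_excess hS hP, trisecants, Finset.card_filter]
  refine Finset.sum_le_sum fun L _ => ?_
  split_ifs <;> omega

/-- Every line through `P ∈ S` is a bisecant, except that `τ` has one point of `S` less and `θ` has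
one more. For `τ = θ` this says that all lines through `P` are bisecants, for `τ ≠ θ` that `τ` is a
tangent, `θ` a trisecant, and all other lines through `P` are bisecants. -/
structure LightAt (S : Finset (PGPoint F)) (P : PGPoint F) (τ θ : PGLine F) : Prop where
  mem : P ∈ S
  mem_left : pgMem P τ
  mem_right : pgMem P θ
  sec : ∀ L, pgMem P L → nsec (S : Set (PGPoint F)) L + (if L = τ then 1 else 0)
    = 2 + (if L = θ then 1 else 0)

lemma lightAt_of_tangents_eq_zero {S : Finset (PGPoint F)} (hS : #S = Fintype.card F + 2)
    {P : PGPoint F} (hP : P ∈ S) (h : tangents S P = 0) {L : PGLine F} (hL : pgMem P L) :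
    LightAt S P L L := by
  refine ⟨hP, hL, hL, fun M hM => ?_⟩
  have h1 := sum_excess hS hP
  rw [h, Finset.sum_eq_zero_iff] at h1
  have h2 := h1 M (mem_pencil.2 hM)
  have h3 := one_le_nsec hP hM
  rw [tangents, Finset.card_eq_zero, Finset.filter_eq_empty_iff] at h
  have h4 := h (mem_pencil.2 hM)
  congr 1
  omega

lemma exists_lightAt_of_tangents_eq_one {S : Finset (PGPoint F)} (hS : #S = Fintype.card F + 2)
    {P : PGPoint F} (hP : P ∈ S) (h : tangents S P = 1) :
    ∃ τ θ, τ ≠ θ ∧ LightAt S P τ θ := by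
  have h1 := sum_excess hS hP
  rw [h] at h1
  rw [tangents, Finset.card_eq_one] at h
  obtain ⟨τ, hτ⟩ := h
  obtain ⟨θ, hθ, hθ1⟩ : ∃ θ ∈ pencil P, nsec (S : Set (PGPoint F)) θ - 2 ≠ 0 := by
    by_contra! h0
    rw [Finset.sum_eq_zero h0] at h1
    omega
  rw [← Finset.add_sum_erase _ _ hθ] at h1
  have h2 : ∑ L ∈ (pencil P).erase θ, (nsec (S : Set (PGPoint F)) L - 2) = 0 := by omega
  rw [Finset.sum_eq_zero_iff] at h2
  have key (L : PGLine F) : pgMem P L ∧ nsec (S : Set (PGPoint F)) L = 1 ↔ L = τ := by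
    have := Finset.ext_iff.1 hτ L
    simpa using this
  have hτ' := (key τ).2 rfl
  have hne : τ ≠ θ := by
    rintro rfl
    omega
  refine ⟨τ, θ, hne, hP, hτ'.1, mem_pencil.1 hθ, fun L hL => ?_⟩
  by_cases hLτ : L = τ
  · subst hLτ
    simp [hne, hτ'.2]
  · have h4 : nsec (S : Set (PGPoint F)) L ≠ 1 := fun h => hLτ ((key L).1 ⟨hL, h⟩)
    have h3 := one_le_nsec hP hL
    by_cases hLθ : L = θ
    · subst hLθ
      simp only [hLτ, if_false, if_true]
      omega
    · have := h2 L (by simp [hLθ, hL])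
      simp only [hLτ, hLθ, if_false]
      omega

end Counting

/-! ### Triangles of light points -/

section Light

variable {S : Finset (PGPoint F)} {P : PGPoint F} {τ θ L : PGLine F}

lemma LightAt.nsec_eq_two (h : LightAt S P τ θ) (hL : pgMem P L) (h1 : L ≠ τ) (h2 : L ≠ θ) :
    nsec (S : Set (PGPoint F)) L = 2 := by
  simpa [h1, h2] using h.sec L hL

lemma LightAt.nsec_left (h : LightAt S P τ θ) (hne : τ ≠ θ) :
    nsec (S : Set (PGPoint F)) τ = 1 := by
  simpa [hne] using h.sec τ h.mem_left

lemma LightAt.nsec_right (h : LightAt S P τ θ) (hne : τ ≠ θ) :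
    nsec (S : Set (PGPoint F)) θ = 3 := by
  simpa [hne.symm] using h.sec θ h.mem_right

lemma eq_or_eq_of_nsec_eq_two {Q R : PGPoint F} (h : nsec (S : Set (PGPoint F)) L = 2)
    (hP : P ∈ S) (hPL : pgMem P L) (hQ : Q ∈ S) (hQL : pgMem Q L) (hPQ : P ≠ Q)
    (hR : R ∈ S) (hRL : pgMem R L) : R = P ∨ R = Q := by
  rw [nsec_coe] at h
  have h1 : ({P, Q} : Finset (PGPoint F)) = {X ∈ S | pgMem X L} := by
    apply Finset.eq_of_subset_of_card_le
    · intro X hX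
      rw [Finset.mem_insert, Finset.mem_singleton] at hX
      rcases hX with rfl | rfl
      · exact Finset.mem_filter.2 ⟨hP, hPL⟩
      · exact Finset.mem_filter.2 ⟨hQ, hQL⟩
    · rw [h, Finset.card_pair hPQ]
  have h2 : R ∈ ({P, Q} : Finset (PGPoint F)) := h1 ▸ Finset.mem_filter.2 ⟨hR, hRL⟩
  simpa using h2

lemma eq_of_nsec_eq_one {Q : PGPoint F} (h : nsec (S : Set (PGPoint F)) L = 1)
    (hP : P ∈ S) (hPL : pgMem P L) (hQ : Q ∈ S) (hQL : pgMem Q L) : P = Q := by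
  rw [nsec_coe, Finset.card_eq_one] at h
  obtain ⟨X, hX⟩ := h
  have hP' : P ∈ ({X} : Finset (PGPoint F)) := hX ▸ Finset.mem_filter.2 ⟨hP, hPL⟩
  have hQ' : Q ∈ ({X} : Finset (PGPoint F)) := hX ▸ Finset.mem_filter.2 ⟨hQ, hQL⟩
  rw [Finset.mem_singleton] at hP' hQ'
  rw [hP', hQ']

lemma eq_line_iff {e : Frame F} {c : F} (hL : HasEq e L 0 1 (-c)) {M : PGLine F}
    (hP1 : e P.rep 1 = 0) (hP2 : e P.rep 2 = 0) (hPM : pgMem P M) {O : PGPoint F}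
    (hO : pgMem O M) (hO2 : e O.rep 2 ≠ 0) : L = M ↔ c = e O.rep 1 / e O.rep 2 := by
  rw [eq_div_iff hO2]
  constructor
  · rintro rfl
    have := hL.mem.1 hO
    linear_combination -this
  · intro hc
    refine line_unique (P := P) (Q := O) ?_ ?_ ?_ hPM hO
    · rintro rfl
      exact hO2 hP2
    · rw [hL.mem, hP1, hP2]
      ring
    · rw [hL.mem]
      linear_combination -hc

/-- The points of `S` off the sides of the coordinate triangle of `e`. -/
noncomputable def offSides (e : Frame F) (S : Finset (PGPoint F)) : Finset (PGPoint F) :=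
  {X ∈ S | e X.rep 0 ≠ 0 ∧ e X.rep 1 ≠ 0 ∧ e X.rep 2 ≠ 0}

lemma offSides_rotate (e : Frame F) (S : Finset (PGPoint F)) :
    offSides e.rotate S = offSides e S := by
  refine Finset.filter_congr fun X _ => ?_
  simp only [Frame.rotate_zero, Frame.rotate_one, Frame.rotate_two]
  tauto

variable [Fintype F]

lemma LightAt.prod_slopes (h : LightAt S P τ θ) {e : Frame F} (hP1 : e P.rep 1 = 0)
    (hP2 : e P.rep 2 = 0) {O D : PGPoint F} (hO : pgMem O τ) (hD : pgMem D θ)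
    (hO1 : e O.rep 1 ≠ 0) (hO2 : e O.rep 2 ≠ 0) (hD1 : e D.rep 1 ≠ 0) (hD2 : e D.rep 2 ≠ 0)
    (hs : ∀ X ∈ S, e X.rep 1 ≠ 0 → e X.rep 2 ≠ 0 → e X.rep 0 ≠ 0) :
    (∏ X ∈ offSides e S, e X.rep 1 / e X.rep 2) * (e O.rep 1 / e O.rep 2)
      = -(e D.rep 1 / e D.rep 2) := by
  rw [← neg_one_mul, ← prod_erase_zero]
  refine prod_mul_of_fibers (f := fun X : PGPoint F => e X.rep 1 / e X.rep 2) ?_ ?_ ?_ ?_ id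
  · intro X hX
    have := (Finset.mem_filter.1 hX).2
    simpa using ⟨this.2.1, this.2.2⟩
  · simpa using ⟨hO1, hO2⟩
  · simpa using ⟨hD1, hD2⟩
  · intro c hc
    have hc0 : c ≠ 0 := Finset.ne_of_mem_erase hc
    obtain ⟨M, hM⟩ := exists_hasEq e 0 1 (-c) (by simp)
    have hPM : pgMem P M := by
      rw [hM.mem, hP1, hP2]
      ring
    have h1 := h.sec M hPM
    simp only [eq_line_iff hM hP1 hP2 h.mem_left hO hO2,
      eq_line_iff hM hP1 hP2 h.mem_right hD hD2] at h1
    rw [nsec_eq_card_erase h.mem hPM] at h1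
    have h2 : ({X ∈ offSides e S | e X.rep 1 / e X.rep 2 = c} : Finset (PGPoint F))
        = {X ∈ S.erase P | pgMem X M} := by
      ext X
      simp only [offSides, Finset.mem_filter, Finset.mem_erase, hM.mem]
      constructor
      · rintro ⟨⟨hX, hX0, hX1, hX2⟩, hXc⟩
        refine ⟨⟨?_, hX⟩, ?_⟩
        · rintro rfl
          exact hX2 hP2
        · rw [div_eq_iff hX2] at hXc
          linear_combination hXc
      · rintro ⟨⟨hXP, hX⟩, hXc⟩
        have hXc' : e X.rep 1 = c * e X.rep 2 := by linear_combination hXc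
        have hX2 : e X.rep 2 ≠ 0 := by
          intro h0
          rw [h0, mul_zero] at hXc'
          have hP0 : e P.rep 0 ≠ 0 := by
            have := rep_coord_ne_zero e P
            tauto
          refine hXP (eq_of_coord_smul e (e X.rep 0 / e P.rep 0) fun i => ?_)
          fin_cases i
          · exact (div_mul_cancel₀ _ hP0).symm
          · simp [hXc', hP1]
          · simp [h0, hP2]
        have hX1 : e X.rep 1 ≠ 0 := by
          rw [hXc']
          exact mul_ne_zero hc0 hX2
        exact ⟨⟨hX, hs X hX hX1 hX2, hX1, hX2⟩, by rw [hXc', mul_div_cancel_right₀ _ hX2]⟩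
    rw [h2]
    omega

/-- There is no triangle of light points whose left lines concur, whose right lines concur, and
whose sides are not among these lines. -/
theorem no_light_triangle (hodd : (2 : F) ≠ 0) {P Q R O D : PGPoint F}
    {τP θP τQ θQ τR θR : PGLine F}
    (hP : LightAt S P τP θP) (hQ : LightAt S Q τQ θQ) (hR : LightAt S R τR θR)
    (hPQ : P ≠ Q) (hPR : P ≠ R) (hQR : Q ≠ R)
    (hOP : pgMem O τP) (hOQ : pgMem O τQ) (hOR : pgMem O τR)
    (hDP : pgMem D θP) (hDQ : pgMem D θQ) (hDR : pgMem D θR)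
    (hPτQ : ¬ pgMem P τQ) (hPτR : ¬ pgMem P τR) (hPθQ : ¬ pgMem P θQ) (hPθR : ¬ pgMem P θR)
    (hQτP : ¬ pgMem Q τP) (hQτR : ¬ pgMem Q τR) (hQθP : ¬ pgMem Q θP) (hQθR : ¬ pgMem Q θR)
    (hRτP : ¬ pgMem R τP) (hRτQ : ¬ pgMem R τQ) (hRθP : ¬ pgMem R θP) (hRθQ : ¬ pgMem R θQ) :
    False := by
  have side {A B : PGPoint F} {τ θ : PGLine F} (hA : LightAt S A τ θ) (hBS : B ∈ S) (hAB : A ≠ B)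
      (h1 : ¬ pgMem B τ) (h2 : ¬ pgMem B θ) {K : PGLine F} (hAK : pgMem A K) (hBK : pgMem B K)
      {X : PGPoint F} (hX : X ∈ S) (hXK : pgMem X K) : X = A ∨ X = B :=
    eq_or_eq_of_nsec_eq_two (hA.nsec_eq_two hAK (fun h => h1 (h ▸ hBK)) fun h => h2 (h ▸ hBK))
      hA.mem hAK hBS hBK hAB hX hXK
  have off {A B Z : PGPoint F} {τ τ' : PGLine F} (hAτ : pgMem A τ) (hBτ : ¬ pgMem B τ)
      (hAτ' : ¬ pgMem A τ') (hZτ : pgMem Z τ) (hZτ' : pgMem Z τ') {K : PGLine F}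
      (hAK : pgMem A K) (hBK : pgMem B K) : ¬ pgMem Z K := by
    intro hZK
    have hAZ : A ≠ Z := by
      rintro rfl
      exact hAτ' hZτ'
    exact hBτ (line_unique hAZ hAK hZK hAτ hZτ ▸ hBK)
  obtain ⟨K, hPK, hQK⟩ := exists_line hPQ
  have hRK : ¬ pgMem R K := fun h => by
    rcases side hP hQ.mem hPQ hQτP hQθP hPK hQK hR.mem h with h | h
    · exact hPR h.symm
    · exact hQR h.symm
  obtain ⟨e, eR, eP, eQ⟩ := exists_frame (linearIndependent_triple hPQ hPK hQK hRK)
  obtain ⟨l0, h0⟩ := exists_hasEq e 1 0 0 (by simp)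
  obtain ⟨l1, h1⟩ := exists_hasEq e 0 1 0 (by simp)
  obtain ⟨l2, h2⟩ := exists_hasEq e 0 0 1 (by simp)
  have m0 (X : PGPoint F) : pgMem X l0 ↔ e X.rep 0 = 0 := by simp [h0.mem]
  have m1 (X : PGPoint F) : pgMem X l1 ↔ e X.rep 1 = 0 := by simp [h1.mem]
  have m2 (X : PGPoint F) : pgMem X l2 ↔ e X.rep 2 = 0 := by simp [h2.mem]
  have hP0 : pgMem P l0 := by simp [m0, eP]
  have hQ0 : pgMem Q l0 := by simp [m0, eQ]
  have hR1 : pgMem R l1 := by simp [m1, eR]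
  have hQ1 : pgMem Q l1 := by simp [m1, eQ]
  have hR2 : pgMem R l2 := by simp [m2, eR]
  have hP2 : pgMem P l2 := by simp [m2, eP]
  have O0 := (m0 O).not.1 (off hP.mem_left hQτP hPτQ hOP hOQ hP0 hQ0)
  have O1 := (m1 O).not.1 (off hQ.mem_left hRτQ hQτR hOQ hOR hQ1 hR1)
  have O2 := (m2 O).not.1 (off hR.mem_left hPτR hRτP hOR hOP hR2 hP2)
  have D0 := (m0 D).not.1 (off hP.mem_right hQθP hPθQ hDP hDQ hP0 hQ0)
  have D1 := (m1 D).not.1 (off hQ.mem_right hRθQ hQθR hDQ hDR hQ1 hR1)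
  have D2 := (m2 D).not.1 (off hR.mem_right hPθR hRθP hDR hDP hR2 hP2)
  have s0 (X : PGPoint F) (hX : X ∈ S) (hX1 : e X.rep 1 ≠ 0) (hX2 : e X.rep 2 ≠ 0) :
      e X.rep 0 ≠ 0 := by
    intro h
    rcases side hP hQ.mem hPQ hQτP hQθP hP0 hQ0 hX ((m0 X).2 h) with rfl | rfl
    · exact hX2 (by simp [eP])
    · exact hX1 (by simp [eQ])
  have s1 (X : PGPoint F) (hX : X ∈ S) (hX2 : e X.rep 2 ≠ 0) (hX0 : e X.rep 0 ≠ 0) :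
      e X.rep 1 ≠ 0 := by
    intro h
    rcases side hQ hR.mem hQR hRτQ hRθQ hQ1 hR1 hX ((m1 X).2 h) with rfl | rfl
    · exact hX0 (by simp [eQ])
    · exact hX2 (by simp [eR])
  have s2 (X : PGPoint F) (hX : X ∈ S) (hX0 : e X.rep 0 ≠ 0) (hX1 : e X.rep 1 ≠ 0) :
      e X.rep 2 ≠ 0 := by
    intro h
    rcases side hR hP.mem hPR.symm hPτR hPθR hR2 hP2 hX ((m2 X).2 h) with rfl | rfl
    · exact hX1 (by simp [eR])
    · exact hX0 (by simp [eP])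
  have pR := hR.prod_slopes (e := e) (by simp [eR]) (by simp [eR]) hOR hDR O1 O2 D1 D2 s0
  have pP := hP.prod_slopes (e := e.rotate) (by simp [eP]) (by simp [eP]) hOP hDP
    (by simpa using O2) (by simpa using O0) (by simpa using D2) (by simpa using D0)
    (by simpa using s1)
  have pQ := hQ.prod_slopes (e := e.rotate.rotate) (by simp [eQ]) (by simp [eQ]) hOQ hDQ
    (by simpa using O0) (by simpa using O1) (by simpa using D0) (by simpa using D1)
    (by simpa using s2)
  simp only [offSides_rotate, Frame.rotate_zero, Frame.rotate_one, Frame.rotate_two] at pP pQ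
  have hprod : (∏ X ∈ offSides e S, e X.rep 1 / e X.rep 2)
      * (∏ X ∈ offSides e S, e X.rep 2 / e X.rep 0)
      * (∏ X ∈ offSides e S, e X.rep 0 / e X.rep 1) = 1 := by
    rw [← Finset.prod_mul_distrib, ← Finset.prod_mul_distrib]
    refine Finset.prod_eq_one fun X hX => ?_
    obtain ⟨-, x0, x1, x2⟩ := Finset.mem_filter.1 hX
    field_simp
  have hOO : (e O.rep 1 / e O.rep 2) * (e O.rep 2 / e O.rep 0) * (e O.rep 0 / e O.rep 1) = 1 := by
    field_simp
  have hDD : (e D.rep 1 / e D.rep 2) * (e D.rep 2 / e D.rep 0) * (e D.rep 0 / e D.rep 1) = 1 := by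
    field_simp
  have key {a b c o o' o'' d d' d'' : F} (h1 : a * o = -d) (h2 : b * o' = -d') (h3 : c * o'' = -d'')
      (habc : a * b * c = 1) (ho : o * o' * o'' = 1) (hd : d * d' * d'' = 1) : (2 : F) = 0 := by
    have h4 : (a * o) * (b * o') * (c * o'') = -(d * d' * d'') := by
      rw [h1, h2, h3]
      ring
    linear_combination h4 - (a * b * c) * ho - habc - hd
  exact hodd (key pR pP pQ hprod hOO hDD)

end Light

/-! ### Trisecants with three light points -/

section Trisecant

variable {S : Finset (PGPoint F)} {ℓ τ θ L : PGLine F} {P : PGPoint F} {e : Frame F}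

/-- A trisecant of `S` on each point of which there is a tangent, all further lines being
bisecants. -/
def Bad (S : Finset (PGPoint F)) (ℓ : PGLine F) : Prop :=
  nsec (S : Set (PGPoint F)) ℓ = 3 ∧ ∀ P ∈ S, pgMem P ℓ → ∃ τ, τ ≠ ℓ ∧ LightAt S P τ ℓ

/-- The points of `S` off the line `z = 0`. -/
noncomputable def affinePart (e : Frame F) (S : Finset (PGPoint F)) : Finset (PGPoint F) :=
  {X ∈ S | e X.rep 2 ≠ 0}

lemma HasEq.smul {a b c : F} (h : HasEq e L a b c) {t : F} (ht : t ≠ 0) :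
    HasEq e L (t * a) (t * b) (t * c) := by
  intro v
  rw [h v, ← mul_right_inj' ht, mul_zero]
  ring_nf

lemma exists_scale (e : Frame F) {x y : F} (hx : x ≠ 0) (hy : y ≠ 0) :
    ∃ e' : Frame F, ∀ v, e' v 0 = x * e v 0 ∧ e' v 1 = y * e v 1 ∧ e' v 2 = e v 2 := by
  refine ⟨e.trans (LinearEquiv.piCongrRight fun i => LinearEquiv.smulOfUnit
    (![Units.mk0 x hx, Units.mk0 y hy, 1] i)), fun v => ⟨?_, ?_, ?_⟩⟩
  · simp [LinearEquiv.smulOfUnit, Units.smul_def]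
  · simp [LinearEquiv.smulOfUnit, Units.smul_def]
  · simp [LinearEquiv.smulOfUnit]

lemma LightAt.card_fiber (hV : LightAt S P τ ℓ) (hℓ : HasEq e ℓ 0 0 1) {a b : F}
    (hab : a ≠ 0 ∨ b ≠ 0) (hP : a * e P.rep 0 + b * e P.rep 1 = 0) {c : F}
    (hL : HasEq e L a b (-c)) :
    #{X ∈ affinePart e S | (a * e X.rep 0 + b * e X.rep 1) / e X.rep 2 = c}
      + (if L = τ then 1 else 0) = 1 := by
  have hP2 : e P.rep 2 = 0 := by simpa using hℓ.mem.1 hV.mem_right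
  have hPL : pgMem P L := by
    rw [hL.mem, hP2]
    linear_combination hP
  have hne : L ≠ ℓ := by
    rintro rfl
    have key (v : Fin 3 → F) := (hℓ (e.symm v)).symm.trans (hL (e.symm v))
    have h1 := key ![1, 0, 0]
    have h2 := key ![0, 1, 0]
    simp at h1 h2
    simp [h1, h2] at hab
  have h1 := hV.sec L hPL
  rw [nsec_eq_card_erase hV.mem hPL] at h1
  have h2 : ({X ∈ affinePart e S | (a * e X.rep 0 + b * e X.rep 1) / e X.rep 2 = c}
      : Finset (PGPoint F)) = {X ∈ S.erase P | pgMem X L} := by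
    ext X
    simp only [affinePart, Finset.mem_filter, Finset.mem_erase, hL.mem]
    constructor
    · rintro ⟨⟨hX, hX2⟩, hXc⟩
      refine ⟨⟨?_, hX⟩, ?_⟩
      · rintro rfl
        exact hX2 hP2
      · rw [div_eq_iff hX2] at hXc
        linear_combination hXc
    · rintro ⟨⟨hXP, hX⟩, hXc⟩
      have hX2 : e X.rep 2 ≠ 0 := by
        intro h0
        exact hne (line_unique hXP (hL.mem.2 hXc) hPL (hℓ.mem.2 (by simp [h0])) hV.mem_right)
      refine ⟨⟨hX, hX2⟩, ?_⟩
      rw [div_eq_iff hX2]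
      linear_combination hXc
  rw [h2]
  simp only [hne, if_false] at h1
  omega

lemma LightAt.bijNonzero (hV : LightAt S P τ ℓ) (hℓ : HasEq e ℓ 0 0 1) {a b : F}
    (hab : a ≠ 0 ∨ b ≠ 0) (hP : a * e P.rep 0 + b * e P.rep 1 = 0) (hτ : HasEq e τ a b 0) :
    BijNonzero (affinePart e S) fun X => (a * e X.rep 0 + b * e X.rep 1) / e X.rep 2 := by
  constructor
  · intro X hX h0
    have h1 := hV.card_fiber hℓ hab hP (c := 0) (L := τ) (by simpa using hτ)
    simp only [if_true, Nat.add_eq_right, Finset.card_eq_zero] at h1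
    exact Finset.filter_eq_empty_iff.1 h1 hX h0
  · intro c hc
    obtain ⟨L, hL⟩ := exists_hasEq e a b (-c) (by tauto)
    have h1 := hV.card_fiber hℓ hab hP hL
    have hne : L ≠ τ := by
      rintro rfl
      have key := (hτ (e.symm ![0, 0, 1])).symm.trans (hL (e.symm ![0, 0, 1]))
      simp at key
      exact hc key
    simpa [hne] using h1

/-- A frame adapted to the trisecant `ℓ`: the points of `S` on `ℓ` are `(1 : 0 : 0)`, `(0 : 1 : 0)`
and `(1 : 1 : 0)`, and the tangents at these points pass through `(0 : 0 : 1)`. -/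
structure TriFrame (S : Finset (PGPoint F)) (ℓ : PGLine F) (e : Frame F) : Prop where
  line : HasEq e ℓ 0 0 1
  inf : ∀ X ∈ S, e X.rep 2 = 0 → e X.rep 0 = 0 ∨ e X.rep 1 = 0 ∨ e X.rep 0 = e X.rep 1
  exists_fst : ∃ A ∈ S, e A.rep 1 = 0 ∧ e A.rep 2 = 0
  exists_snd : ∃ B ∈ S, e B.rep 0 = 0 ∧ e B.rep 2 = 0
  exists_diag : ∃ C ∈ S, e C.rep 0 = e C.rep 1 ∧ e C.rep 2 = 0
  bij_fst : BijNonzero (affinePart e S) fun X => e X.rep 0 / e X.rep 2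
  bij_snd : BijNonzero (affinePart e S) fun X => e X.rep 1 / e X.rep 2
  bij_diag : BijNonzero (affinePart e S) fun X => e X.rep 0 / e X.rep 2 - e X.rep 1 / e X.rep 2

lemma sum_univ_eq_zero [Fintype F] (hq : 3 < Fintype.card F) : ∑ c : F, c = 0 := by
  simpa using FiniteField.sum_pow_lt_card_sub_one F 1 (by omega)

lemma BijNonzero.sum_eq_zero [Fintype F] (hq : 3 < Fintype.card F) {s : Finset (PGPoint F)}
    {x : PGPoint F → F} (h : BijNonzero s x) : ∑ X ∈ s, x X = 0 := by
  have h1 := sum_of_fibers (s := s) (f := x) (T := univ.erase 0) (by simpa using h.1)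
    (fun c hc => h.2 c (Finset.ne_of_mem_erase hc)) id
  simp only [id] at h1
  have h2 := Finset.add_sum_erase univ (fun c : F => c) (Finset.mem_univ 0)
  rw [sum_univ_eq_zero hq, zero_add] at h2
  rw [h1, h2]

lemma BijNonzero.card_eq [Fintype F] {s : Finset (PGPoint F)}
    {x : PGPoint F → F} (h : BijNonzero s x) : #s + 1 = Fintype.card F := by
  have h1 := sum_of_fibers (s := s) (f := x) (T := univ.erase 0) (by simpa using h.1)
    (fun c hc => h.2 c (Finset.ne_of_mem_erase hc)) (fun _ => 1)
  simp only [Finset.sum_const, smul_eq_mul, mul_one] at h1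
  rw [h1, Finset.card_erase_add_one (Finset.mem_univ _), Finset.card_univ]

theorem exists_triFrame [Fintype F] (hq : 3 < Fintype.card F) (h : Bad S ℓ) :
    ∃ e, TriFrame S ℓ e := by
  obtain ⟨h3, hlight⟩ := h
  rw [nsec_coe, Finset.card_eq_three] at h3
  obtain ⟨A, B, C, hAB, hAC, hBC, hABC⟩ := h3
  have hmem (X : PGPoint F) : X ∈ S ∧ pgMem X ℓ ↔ X = A ∨ X = B ∨ X = C := by
    have := Finset.ext_iff.1 hABC X
    simpa using this
  obtain ⟨hA, hAℓ⟩ := (hmem A).2 (by simp)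
  obtain ⟨hB, hBℓ⟩ := (hmem B).2 (by simp)
  obtain ⟨hC, hCℓ⟩ := (hmem C).2 (by simp)
  obtain ⟨τA, hτA, lA⟩ := hlight A hA hAℓ
  obtain ⟨τB, hτB, lB⟩ := hlight B hB hBℓ
  obtain ⟨τC, hτC, lC⟩ := hlight C hC hCℓ
  obtain ⟨O, hOA, hOB⟩ := exists_meet τA τB
  have hAO : A ≠ O := by
    rintro rfl
    exact hτB (line_unique hAB hOB lB.mem_left hAℓ hBℓ)
  have hBO : B ≠ O := by
    rintro rfl
    exact hτA (line_unique hAB lA.mem_left hOA hAℓ hBℓ)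
  have hOℓ : ¬ pgMem O ℓ := fun h => hτA (line_unique hAO lA.mem_left hOA hAℓ h)
  obtain ⟨e₀, e₀O, e₀A, e₀B⟩ := exists_frame (linearIndependent_triple hAB hAℓ hBℓ hOℓ)
  have line₀ : HasEq e₀ ℓ 1 0 0 := by
    obtain ⟨L, hL⟩ := exists_hasEq e₀ 1 0 0 (by simp)
    rwa [line_unique hAB hAℓ hBℓ (hL.mem.2 (by simp [e₀A])) (hL.mem.2 (by simp [e₀B]))]
  have hC0 : e₀ C.rep 0 = 0 := by simpa using line₀.mem.1 hCℓ
  have hC1 : e₀ C.rep 1 ≠ 0 := fun h => hBC (Eq.symm (eq_of_coord_smul e₀ (e₀ C.rep 2) fun i => by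
    fin_cases i <;> simp [hC0, h, e₀B]))
  have hC2 : e₀ C.rep 2 ≠ 0 := fun h => hAC (Eq.symm (eq_of_coord_smul e₀ (e₀ C.rep 1) fun i => by
    fin_cases i <;> simp [hC0, h, e₀A]))
  obtain ⟨e, he⟩ := exists_scale e₀.rotate hC2 hC1
  have x (v) : e v 0 = e₀ C.rep 2 * e₀ v 1 := by simpa using (he v).1
  have y (v) : e v 1 = e₀ C.rep 1 * e₀ v 2 := by simpa using (he v).2.1
  have z (v) : e v 2 = e₀ v 0 := by simpa using (he v).2.2
  have hline : HasEq e ℓ 0 0 1 := by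
    intro v
    rw [line₀ v, z v]
    simp
  have eqA : HasEq e τA 0 1 0 := by
    obtain ⟨L, hL⟩ := exists_hasEq e 0 1 0 (by simp)
    rwa [line_unique hAO lA.mem_left hOA (hL.mem.2 (by simp [y, e₀A]))
      (hL.mem.2 (by simp [y, e₀O]))]
  have eqB : HasEq e τB 1 0 0 := by
    obtain ⟨L, hL⟩ := exists_hasEq e 1 0 0 (by simp)
    rwa [line_unique hBO lB.mem_left hOB (hL.mem.2 (by simp [x, e₀B]))
      (hL.mem.2 (by simp [x, e₀O]))]
  have hy' := lA.bijNonzero hline (a := 0) (b := 1) (by simp) (by simp [y, e₀A]) eqA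
  have hx' := lB.bijNonzero hline (a := 1) (b := 0) (by simp) (by simp [x, e₀B]) eqB
  simp only [zero_mul, one_mul, zero_add, add_zero] at hy' hx'
  have hCd : (1 : F) * e C.rep 0 + (-1) * e C.rep 1 = 0 := by
    rw [x, y]
    ring
  have hτC0 : HasEq e τC 1 (-1) 0 := by
    choose l hl using fun c : F => exists_hasEq e 1 (-1) (-c) (by simp)
    have hfib (c : F) := lC.card_fiber hline (by simp) hCd (hl c)
    obtain ⟨c₀, hc₀⟩ : ∃ c, l c = τC := by
      by_contra! hno
      have h1 := sum_of_fibers (s := affinePart e S) (T := univ) (by simp)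
        (fun c _ => by simpa [hno c] using hfib c) (fun _ => 1)
      simp only [Finset.sum_const, smul_eq_mul, mul_one, Finset.card_univ] at h1
      have := hx'.card_eq
      omega
    have hinj (c : F) (hc : l c = τC) : c = c₀ := by
      have h1 := hl c
      rw [hc, ← hc₀] at h1
      have := (h1 (e.symm ![c, 0, 1])).symm.trans (hl c₀ (e.symm ![c, 0, 1]))
      simpa [← sub_eq_add_neg, sub_eq_zero] using this
    have h2 := sum_of_fibers (s := affinePart e S) (T := univ.erase c₀)
      (f := fun X => (1 * e X.rep 0 + (-1) * e X.rep 1) / e X.rep 2)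
      (fun X hX => by
        have := hfib c₀
        simp only [hc₀, if_true, Nat.add_eq_right, Finset.card_eq_zero] at this
        exact Finset.mem_erase.2 ⟨Finset.filter_eq_empty_iff.1 this hX, Finset.mem_univ _⟩)
      (fun c hc => by
        have hne : l c ≠ τC := fun h => Finset.ne_of_mem_erase hc (hinj c h)
        simpa [hne] using hfib c) id
    have h3 := Finset.add_sum_erase univ (fun c : F => c) (Finset.mem_univ c₀)
    rw [sum_univ_eq_zero hq] at h3
    simp only [id] at h2
    rw [← h2] at h3
    have h4 : ∑ X ∈ affinePart e S, (1 * e X.rep 0 + (-1) * e X.rep 1) / e X.rep 2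
        = ∑ X ∈ affinePart e S, e X.rep 0 / e X.rep 2
          - ∑ X ∈ affinePart e S, e X.rep 1 / e X.rep 2 := by
      rw [← Finset.sum_sub_distrib]
      refine Finset.sum_congr rfl fun X _ => ?_
      ring
    rw [h4, hx'.sum_eq_zero hq, hy'.sum_eq_zero hq, sub_zero, add_zero] at h3
    have h5 := hl c₀
    rwa [hc₀, h3, neg_zero] at h5
  have bd := lC.bijNonzero hline (by simp) hCd hτC0
  refine ⟨e, hline, ?_, ⟨A, hA, ?_, ?_⟩, ⟨B, hB, ?_, ?_⟩, ⟨C, hC, ?_, ?_⟩, hx', hy', ?_⟩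
  · intro X hX hX2
    rcases (hmem X).1 ⟨hX, hline.mem.2 (by simp [hX2])⟩ with rfl | rfl | rfl
    · simp [y, e₀A]
    · simp [x, e₀B]
    · right; right
      linear_combination hCd
  · simp [y, e₀A]
  · simp [z, e₀A]
  · simp [x, e₀B]
  · simp [z, e₀B]
  · linear_combination hCd
  · simp [z, hC0]
  · convert bd using 2
    ring

end Trisecant

/-! ### Light points relative to a trisecant with three light points -/

section Relations

variable {S : Finset (PGPoint F)} {ℓ τ θ L M : PGLine F} {P Q : PGPoint F} {e : Frame F}

/-- The point with coordinate vector `w` in the frame `e`. -/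
noncomputable def pt (e : Frame F) (w : Fin 3 → F) (hw : w ≠ 0) : PGPoint F :=
  Projectivization.mk F (e.symm w) (by simpa using hw)

lemma HasEq.pt_mem {a b c : F} (h : HasEq e L a b c) {w : Fin 3 → F} (hw : w ≠ 0) :
    pgMem (pt e w hw) L ↔ a * w 0 + b * w 1 + c * w 2 = 0 := by
  rw [pt, pgMem_mk, h]
  simp

lemma HasEq.eq_iff {α β x y : F} (hL : HasEq e L α (-1) (y - α * x))
    (hM : HasEq e M β (-1) (y - β * x)) : L = M ↔ α = β := by
  constructor
  · rintro rfl
    have := (hL (e.symm ![1, α, 0])).symm.trans (hM (e.symm ![1, α, 0]))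
    simp at this
    linear_combination -this
  · rintro rfl
    exact hL.unique hM

lemma mem_affinePart {X : PGPoint F} : X ∈ affinePart e S ↔ X ∈ S ∧ e X.rep 2 ≠ 0 := by
  simp [affinePart]

lemma LightAt.eq_right [Fintype F] (h : LightAt S P τ θ) (hL : pgMem P L)
    (h3 : nsec (S : Set (PGPoint F)) L = 3) : L = θ := by
  have := h.sec L hL
  by_contra hne
  simp only [hne, if_false] at this
  omega

lemma LightAt.eq_left [Fintype F] (h : LightAt S P τ θ) (hL : pgMem P L)
    (h1 : nsec (S : Set (PGPoint F)) L = 1) : L = τ := by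
  have := h.sec L hL
  by_contra hne
  simp only [hne, if_false] at this
  omega

lemma LightAt.not_mem_left (h : LightAt S P τ θ) (hne : τ ≠ θ) (hQ : Q ∈ S) (hPQ : P ≠ Q) :
    ¬ pgMem Q τ := fun hQτ =>
  hPQ (eq_of_nsec_eq_one (h.nsec_left hne) h.mem h.mem_left hQ hQτ)

lemma TriFrame.mem_line (t : TriFrame S ℓ e) {X : PGPoint F} : pgMem X ℓ ↔ e X.rep 2 = 0 := by
  simp [t.line.mem]

/-- The slope of a line which meets the trisecant outside `S`. -/
lemma TriFrame.exists_slope (t : TriFrame S ℓ e) (hP2 : e P.rep 2 ≠ 0) (hPM : pgMem P M)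
    (h : ∀ X ∈ S, pgMem X ℓ → ¬ pgMem X M) :
    ∃ α, α ≠ 0 ∧ α ≠ 1 ∧ HasEq e M α (-1) (e P.rep 1 / e P.rep 2
      - α * (e P.rep 0 / e P.rep 2)) := by
  obtain ⟨a, b, c, -, hM⟩ := hasEq_exists e M
  obtain ⟨A, hA, hA1, hA2⟩ := t.exists_fst
  obtain ⟨B, hB, hB0, hB2⟩ := t.exists_snd
  obtain ⟨C, hC, hC1, hC2⟩ := t.exists_diag
  have ha : a ≠ 0 := by
    rintro rfl
    exact h A hA (t.mem_line.2 hA2) (hM.mem.2 (by simp [hA1, hA2]))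
  have hb : b ≠ 0 := by
    rintro rfl
    exact h B hB (t.mem_line.2 hB2) (hM.mem.2 (by simp [hB0, hB2]))
  have hab : a + b ≠ 0 := fun h0 => h C hC (t.mem_line.2 hC2) (hM.mem.2 (by
    rw [hC1, hC2]
    linear_combination e C.rep 1 * h0))
  refine ⟨-a / b, by simp [ha, hb], ?_, ?_⟩
  · rw [Ne, div_eq_iff hb]
    exact fun h0 => hab (by linear_combination -h0)
  · have h1 := hM.smul (t := -1 / b) (by simp [hb])
    have h2 := hM.mem.1 hPM
    convert h1 using 1
    · ring
    · field_simp
    · field_simp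
      linear_combination h2

lemma TriFrame.relations [Fintype F] (t : TriFrame S ℓ e) (h : LightAt S P τ θ)
    (hP2 : e P.rep 2 ≠ 0) {α β : F} (hα0 : α ≠ 0) (hα1 : α ≠ 1) (hβ0 : β ≠ 0) (hβ1 : β ≠ 1)
    (hτ : HasEq e τ α (-1) (e P.rep 1 / e P.rep 2 - α * (e P.rep 0 / e P.rep 2)))
    (hθ : HasEq e θ β (-1) (e P.rep 1 / e P.rep 2 - β * (e P.rep 0 / e P.rep 2))) :
    β * (e P.rep 1 / e P.rep 2) = -(α * (e P.rep 0 / e P.rep 2)) ∧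
      (1 - β) * (e P.rep 0 / e P.rep 2 - e P.rep 1 / e P.rep 2)
        = -((1 - α) * (e P.rep 0 / e P.rep 2)) := by
  refine slope_relations t.bij_fst t.bij_snd t.bij_diag (mem_affinePart.2 ⟨h.mem, hP2⟩)
    hα0 hα1 hβ0 hβ1 fun c hc0 hc1 => ?_
  obtain ⟨M, hM⟩ := exists_hasEq e c (-1) (e P.rep 1 / e P.rep 2 - c * (e P.rep 0 / e P.rep 2))
    (by simp)
  have hPM : pgMem P M := by
    rw [hM.mem]
    field_simp
    ring
  have h1 := h.sec M hPM
  simp only [hM.eq_iff hτ, hM.eq_iff hθ] at h1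
  rw [nsec_eq_card_erase h.mem hPM] at h1
  have h2 : ({X ∈ (affinePart e S).erase P | e X.rep 1 / e X.rep 2 - e P.rep 1 / e P.rep 2
      = c * (e X.rep 0 / e X.rep 2 - e P.rep 0 / e P.rep 2)} : Finset (PGPoint F))
      = {X ∈ S.erase P | pgMem X M} := by
    ext X
    simp only [Finset.mem_filter, Finset.mem_erase, mem_affinePart]
    have key (hX2 : e X.rep 2 ≠ 0) : pgMem X M ↔ e X.rep 1 / e X.rep 2 - e P.rep 1 / e P.rep 2
        = c * (e X.rep 0 / e X.rep 2 - e P.rep 0 / e P.rep 2) := by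
      rw [hM.mem]
      have h3 : c * e X.rep 0 + -1 * e X.rep 1
          + (e P.rep 1 / e P.rep 2 - c * (e P.rep 0 / e P.rep 2)) * e X.rep 2
          = -e X.rep 2 * ((e X.rep 1 / e X.rep 2 - e P.rep 1 / e P.rep 2)
            - c * (e X.rep 0 / e X.rep 2 - e P.rep 0 / e P.rep 2)) := by
        field_simp
        ring
      rw [h3, mul_eq_zero, sub_eq_zero]
      simp [hX2]
    constructor
    · rintro ⟨⟨hXP, hX, hX2⟩, hXc⟩
      exact ⟨⟨hXP, hX⟩, (key hX2).2 hXc⟩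
    · rintro ⟨⟨hXP, hX⟩, hXM⟩
      have hX2 : e X.rep 2 ≠ 0 := by
        intro h0
        have h3 := hM.mem.1 hXM
        rw [h0, mul_zero, add_zero] at h3
        have h4 := rep_coord_ne_zero e X
        rcases t.inf X hX h0 with h5 | h5 | h5
        · simp_all
        · simp_all
        · have h6 : (c - 1) * e X.rep 1 = 0 := by linear_combination h3 - c * h5
          have h7 := (mul_eq_zero.1 h6).resolve_left (sub_ne_zero.2 hc1)
          simp_all
      exact ⟨⟨hXP, hX, hX2⟩, (key hX2).1 hXM⟩
  rw [h2]
  omega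

lemma TriFrame.fst_ne_zero (t : TriFrame S ℓ e) (hP : P ∈ S) (hP2 : e P.rep 2 ≠ 0) :
    e P.rep 0 / e P.rep 2 ≠ 0 :=
  t.bij_fst.1 P (mem_affinePart.2 ⟨hP, hP2⟩)

lemma TriFrame.snd_ne_zero (t : TriFrame S ℓ e) (hP : P ∈ S) (hP2 : e P.rep 2 ≠ 0) :
    e P.rep 1 / e P.rep 2 ≠ 0 :=
  t.bij_snd.1 P (mem_affinePart.2 ⟨hP, hP2⟩)

/-- The relations between the slopes of tangent and trisecant at a light point off `ℓ`. -/
lemma TriFrame.light_relations [Fintype F] (t : TriFrame S ℓ e) (hb : Bad S ℓ)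
    (h : LightAt S P τ θ) (hne : τ ≠ θ) (hP2 : e P.rep 2 ≠ 0) :
    ∃ α β, α ≠ β ∧
      HasEq e τ α (-1) (e P.rep 1 / e P.rep 2 - α * (e P.rep 0 / e P.rep 2)) ∧
      HasEq e θ β (-1) (e P.rep 1 / e P.rep 2 - β * (e P.rep 0 / e P.rep 2)) ∧
      β * (e P.rep 1 / e P.rep 2) = -(α * (e P.rep 0 / e P.rep 2)) ∧
      (2 - β) * (e P.rep 0 / e P.rep 2) = (1 - 2 * β) * (e P.rep 1 / e P.rep 2) := by
  have hPX {X : PGPoint F} (hX : pgMem X ℓ) : P ≠ X := by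
    rintro rfl
    exact hP2 (t.mem_line.1 hX)
  obtain ⟨α, hα0, hα1, hα⟩ := t.exists_slope hP2 h.mem_left
    fun X hX hXℓ => h.not_mem_left hne hX (hPX hXℓ)
  obtain ⟨β, hβ0, hβ1, hβ⟩ := t.exists_slope hP2 h.mem_right fun X hX hXℓ hXθ => by
    obtain ⟨σ, -, hσ⟩ := hb.2 X hX hXℓ
    have := hσ.eq_right hXθ (h.nsec_right hne)
    exact hP2 (t.mem_line.1 (this ▸ h.mem_right))
  obtain ⟨h1, h2⟩ := t.relations h hP2 hα0 hα1 hβ0 hβ1 hα hβ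
  refine ⟨α, β, fun h0 => hne ((hα.eq_iff hβ).2 h0), hα, hβ, h1, ?_⟩
  linear_combination h2 + h1

/-- A point of `S` on bisecants only forces characteristic three, and its position relative to
the frame is restricted. -/
lemma TriFrame.nucleus_relations [Fintype F] (hodd : (2 : F) ≠ 0) (t : TriFrame S ℓ e)
    (h : ∀ L, pgMem P L → LightAt S P L L) (hP : P ∈ S) (hP2 : e P.rep 2 ≠ 0) :
    (3 : F) = 0 ∧ e P.rep 0 / e P.rep 2 + e P.rep 1 / e P.rep 2 = 0 := by
  obtain ⟨M, hM⟩ := exists_hasEq e (-1) (-1)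
    (e P.rep 1 / e P.rep 2 - (-1) * (e P.rep 0 / e P.rep 2)) (by simp)
  have hPM : pgMem P M := by
    rw [hM.mem]
    field_simp
    ring
  have h1 : (-1 : F) ≠ 1 := fun h0 => hodd (by linear_combination -h0)
  obtain ⟨h2, h3⟩ := t.relations (h M hPM) hP2 (by simp) h1 (by simp) h1 hM hM
  refine ⟨?_, by linear_combination -h2⟩
  have h4 : 2 * (e P.rep 0 / e P.rep 2) * 3 = 0 := by linear_combination h3 + -2 * h2
  exact (mul_eq_zero.1 h4).resolve_left (mul_ne_zero hodd (t.fst_ne_zero hP hP2))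

lemma not_mem_of_bad [Fintype F] (h : ∀ L, pgMem P L → LightAt S P L L) (hb : Bad S ℓ) :
    ¬ pgMem P ℓ := fun hP => by
  have h1 := (h ℓ hP).sec ℓ hP
  rw [hb.1] at h1
  simp at h1

end Relations

/-! ### Configurations of exceptional points and lines -/

section Configurations

variable {S : Finset (PGPoint F)} {ℓ τ θ L M : PGLine F} {N P Q : PGPoint F}

lemma Bad.exists_two_off (hb : Bad S M) (hne : M ≠ ℓ) :
    ∃ P ∈ S, ∃ Q ∈ S, P ≠ Q ∧ pgMem P M ∧ pgMem Q M ∧ ¬ pgMem P ℓ ∧ ¬ pgMem Q ℓ := by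
  have h3 := hb.1
  rw [nsec_coe] at h3
  have h1 : #{X ∈ {X ∈ S | pgMem X M} | pgMem X ℓ} ≤ 1 := by
    rw [Finset.card_le_one]
    intro X hX Y hY
    by_contra hXY
    simp only [Finset.mem_filter] at hX hY
    exact hne (line_unique hXY hX.1.2 hY.1.2 hX.2 hY.2)
  have h2 := Finset.card_filter_add_card_filter_not (s := {X ∈ S | pgMem X M}) (fun X => pgMem X ℓ)
  obtain ⟨P, hP, Q, hQ, hPQ⟩ := Finset.one_lt_card.1
    (show 1 < #{X ∈ {X ∈ S | pgMem X M} | ¬ pgMem X ℓ} by omega)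
  simp only [Finset.mem_filter] at hP hQ
  exact ⟨P, hP.1.1, Q, hQ.1.1, hPQ, hP.1.2, hQ.1.2, hP.2, hQ.2⟩

variable [Fintype F]

/-- Outside characteristic three, there is a point off `ℓ` through which all other bad lines
pass. -/
lemma Bad.exists_common_point (h3 : (3 : F) ≠ 0) (hq : 3 < Fintype.card F)
    (hb : Bad S ℓ) : ∃ O, ¬ pgMem O ℓ ∧ ∀ M, Bad S M → M ≠ ℓ → pgMem O M := by
  obtain ⟨e, t⟩ := exists_triFrame hq hb
  refine ⟨pt e ![0, 0, 1] (by simp), by simp [t.line.pt_mem], fun M hM hne => ?_⟩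
  obtain ⟨P, hP, Q, hQ, hPQ, hPM, hQM, hPℓ, hQℓ⟩ := hM.exists_two_off hne
  rw [t.mem_line] at hPℓ hQℓ
  obtain ⟨τ, hτ, lP⟩ := hM.2 P hP hPM
  obtain ⟨σ, hσ, lQ⟩ := hM.2 Q hQ hQM
  obtain ⟨-, β, -, -, hβ, -, h1⟩ := t.light_relations hb lP hτ hPℓ
  obtain ⟨-, γ, -, -, hγ, -, h2⟩ := t.light_relations hb lQ hσ hQℓ
  have hu : e P.rep 0 / e P.rep 2 ≠ e Q.rep 0 / e Q.rep 2 := fun h =>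
    hPQ (t.bij_fst.injOn (mem_affinePart.2 ⟨hP, hPℓ⟩) (mem_affinePart.2 ⟨hQ, hQℓ⟩) h)
  rw [hβ.pt_mem]
  generalize e P.rep 0 / e P.rep 2 = u at *
  generalize e P.rep 1 / e P.rep 2 = v at *
  generalize e Q.rep 0 / e Q.rep 2 = u' at *
  generalize e Q.rep 1 / e Q.rep 2 = v' at *
  obtain rfl : β = γ := by
    have := (hβ (e.symm ![1, β, 0])).symm.trans (hγ (e.symm ![1, β, 0]))
    simp at this
    linear_combination -this
  have hv : v - β * u = v' - β * u' := by
    have := (hβ (e.symm ![0, v - β * u, 1])).symm.trans (hγ (e.symm ![0, v - β * u, 1]))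
    simp at this
    linear_combination -this
  have hβ2 : 1 - 2 * β ≠ 0 := by
    intro h0
    rw [h0, zero_mul] at h1 h2
    have h4 : (2 - β) * (u - u') = 0 := by linear_combination h1 - h2
    have h5 := (mul_eq_zero.1 h4).resolve_right (sub_ne_zero.2 hu)
    exact h3 (by linear_combination 2 * h5 - h0)
  have h4 : (2 - β - β * (1 - 2 * β)) * (u - u') = 0 := by
    linear_combination h1 - h2 + (1 - 2 * β) * hv
  have h5 := (mul_eq_zero.1 h4).resolve_right (sub_ne_zero.2 hu)
  have h6 : (1 - 2 * β) * (v - β * u) = 0 := by linear_combination u * h5 - h1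
  simpa using (mul_eq_zero.1 h6).resolve_left hβ2

lemma card_bad_le_three (h3 : (3 : F) ≠ 0) (hq : 3 < Fintype.card F) :
    #{L : PGLine F | Bad S L} ≤ 3 := by
  by_contra! h
  obtain ⟨A, hA⟩ := Finset.card_pos.1 (by omega : 0 < #{L : PGLine F | Bad S L})
  obtain ⟨B, hB, C, hC, D, hD, hBC, hBD, hCD⟩ := Finset.two_lt_card.1
    (show 2 < #(({L : PGLine F | Bad S L} : Finset (PGLine F)).erase A) by
      rw [Finset.card_erase_of_mem hA]
      omega)
  simp only [Finset.mem_filter, Finset.mem_erase, Finset.mem_univ, true_and] at hA hB hC hD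
  obtain ⟨O, hO, hOA⟩ := hA.exists_common_point h3 hq
  obtain ⟨O', hO', hOB⟩ := hB.2.exists_common_point h3 hq
  have hOO' : O ≠ O' := by
    rintro rfl
    exact hO' (hOA B hB.2 hB.1)
  exact hCD (line_unique hOO' (hOA C hC.2 hC.1) (hOB C hC.2 hBC.symm) (hOA D hD.2 hD.1)
    (hOB D hD.2 hBD.symm))

lemma not_forall_lightAt_of_bad (hodd : (2 : F) ≠ 0) (h3 : (3 : F) ≠ 0)
    (hq : 3 < Fintype.card F) (hb : Bad S ℓ) (hN : N ∈ S) : ¬ ∀ L, pgMem N L → LightAt S N L L := by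
  intro h
  obtain ⟨e, t⟩ := exists_triFrame hq hb
  exact h3 (t.nucleus_relations hodd h hN fun h0 => not_mem_of_bad h hb (t.mem_line.2 h0)).1

/-- In characteristic three, the tangents at the light points are concurrent and so are the
trisecants. -/
lemma Bad.exists_concurrent (hodd : (2 : F) ≠ 0) (h3 : (3 : F) = 0) (hq : 3 < Fintype.card F)
    (hb : Bad S ℓ) : ∃ O D, O ≠ D ∧ O ∉ S ∧
      (∀ P τ θ, LightAt S P τ θ → τ ≠ θ → pgMem O τ ∧ pgMem D θ) ∧
      ∀ N ∈ S, (∀ L, pgMem N L → LightAt S N L L) →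
        ∃ M, pgMem N M ∧ pgMem O M ∧ pgMem D M := by
  obtain ⟨e, t⟩ := exists_triFrame hq hb
  have hO : ¬ pgMem (pt e ![0, 0, 1] (by simp)) ℓ := by simp [t.line.pt_mem]
  have hD : pgMem (pt e ![1, -1, 0] (by simp)) ℓ := by simp [t.line.pt_mem]
  refine ⟨pt e ![0, 0, 1] (by simp), pt e ![1, -1, 0] (by simp), ?_, ?_, ?_, ?_⟩
  · intro h
    exact hO (h ▸ hD)
  · intro hOS
    refine t.fst_ne_zero hOS (fun h0 => hO (t.mem_line.2 h0)) ?_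
    obtain ⟨L, hL⟩ := exists_hasEq e 1 0 0 (by simp)
    have h1 : pgMem (pt e ![0, 0, 1] (by simp)) L := by simp [hL.pt_mem]
    rw [hL.mem] at h1
    rw [div_eq_zero_iff]
    left
    linear_combination h1
  · intro P τ θ h hne
    by_cases hPℓ : pgMem P ℓ
    · obtain rfl := h.eq_right hPℓ hb.1
      refine ⟨?_, hD⟩
      have hP2 := t.mem_line.1 hPℓ
      have hP01 := rep_coord_ne_zero e P
      obtain ⟨L, hL⟩ := exists_hasEq e (e P.rep 1) (-e P.rep 0) 0 (by simp; tauto)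
      have hPL : pgMem P L := by
        rw [hL.mem]
        ring
      have hOL : pgMem (pt e ![0, 0, 1] (by simp)) L := by simp [hL.pt_mem]
      rw [← h.eq_left hPL]
      · exact hOL
      · rw [nsec_eq_card_erase h.mem hPL, Nat.add_eq_right, Finset.card_eq_zero,
          Finset.filter_eq_empty_iff]
        intro X hX hXL
        obtain ⟨hXP, hX⟩ := Finset.mem_erase.1 hX
        have hX2 : e X.rep 2 ≠ 0 := by
          intro h0
          have := line_unique hXP (t.mem_line.2 h0) hPℓ hXL hPL
          exact hO (this ▸ hOL)
        have hu := t.fst_ne_zero hX hX2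
        have hv := t.snd_ne_zero hX hX2
        have hd := t.bij_diag.1 X (mem_affinePart.2 ⟨hX, hX2⟩)
        simp only [← sub_div] at hd
        rw [hL.mem] at hXL
        simp only [ne_eq, div_eq_zero_iff, hX2, or_false] at hu hv hd
        rcases t.inf P h.mem hP2 with h0 | h0 | h0
        · simp_all
        · simp_all
        · have h5 : e P.rep 1 * (e X.rep 0 - e X.rep 1) = 0 := by
            linear_combination hXL + e X.rep 1 * h0
          have h6 := (mul_eq_zero.1 h5).resolve_right hd
          simp_all
    · rw [t.mem_line] at hPℓ
      obtain ⟨α, β, hαβ, hα, hβ, h1, h2⟩ := t.light_relations hb h hne hPℓ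
      have hv := t.snd_ne_zero h.mem hPℓ
      rw [hα.pt_mem, hβ.pt_mem]
      generalize e P.rep 0 / e P.rep 2 = u at *
      generalize e P.rep 1 / e P.rep 2 = v at *
      have h4 : (1 + β) * (u + v) = 0 := by linear_combination u * h3 + β * v * h3 - h2
      have huv : u + v ≠ 0 := by
        intro h0
        have h5 : (α - β) * v = 0 := by linear_combination α * h0 - h1
        exact (mul_ne_zero (sub_ne_zero.2 hαβ) hv) h5
      have h5 := (mul_eq_zero.1 h4).resolve_right huv
      constructor
      · simp
        linear_combination v * h5 - h1
      · simp
        linear_combination h5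
  · intro N hN h
    have hN2 : e N.rep 2 ≠ 0 := fun h0 => not_mem_of_bad h hb (t.mem_line.2 h0)
    have h1 := (t.nucleus_relations hodd h hN hN2).2
    obtain ⟨M, hM⟩ := exists_hasEq e 1 1 0 (by simp)
    refine ⟨M, ?_, by simp [hM.pt_mem], by simp [hM.pt_mem]⟩
    rw [hM.mem]
    field_simp at h1
    linear_combination h1

lemma card_bad_le_two (hodd : (2 : F) ≠ 0) (h3 : (3 : F) = 0) (hq : 3 < Fintype.card F) :
    #{L : PGLine F | Bad S L} ≤ 2 := by
  by_contra! h
  obtain ⟨A, hA, B, hB, C, hC, hAB, hAC, hBC⟩ := Finset.two_lt_card.1 h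
  simp only [Finset.mem_filter, Finset.mem_univ, true_and] at hA hB hC
  obtain ⟨O, D, -, -, hOD, -⟩ := hA.exists_concurrent hodd h3 hq
  have point {K : PGLine F} (hK : Bad S K) : ∃ P τ, τ ≠ K ∧ LightAt S P τ K := by
    obtain ⟨P, hP⟩ : ({X ∈ S | pgMem X K} : Finset (PGPoint F)).Nonempty := by
      rw [← Finset.card_pos, ← nsec_coe, hK.1]
      norm_num
    obtain ⟨hPS, hPK⟩ := Finset.mem_filter.1 hP
    obtain ⟨τ, h⟩ := hK.2 P hPS hPK
    exact ⟨P, τ, h⟩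
  obtain ⟨P, ρ, hρ, lP⟩ := point hA
  obtain ⟨Q, σ, hσ, lQ⟩ := point hB
  obtain ⟨R, τ, hτ, lR⟩ := point hC
  have off {X : PGPoint F} {υ K K' : PGLine F} (h : LightAt S X υ K) (hK' : Bad S K')
      (hne : K ≠ K') : ¬ pgMem X K' := fun hX => hne (h.eq_right hX hK'.1).symm
  have hPQ : P ≠ Q := fun h => off lP hB hAB (h ▸ lQ.mem_right)
  have hPR : P ≠ R := fun h => off lP hC hAC (h ▸ lR.mem_right)
  have hQR : Q ≠ R := fun h => off lQ hC hBC (h ▸ lR.mem_right)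
  obtain ⟨hOP, hDP⟩ := hOD _ _ _ lP hρ
  obtain ⟨hOQ, hDQ⟩ := hOD _ _ _ lQ hσ
  obtain ⟨hOR, hDR⟩ := hOD _ _ _ lR hτ
  exact no_light_triangle hodd lP lQ lR hPQ hPR hQR hOP hOQ hOR hDP hDQ hDR
    (lQ.not_mem_left hσ lP.mem hPQ.symm) (lR.not_mem_left hτ lP.mem hPR.symm)
    (off lP hB hAB) (off lP hC hAC)
    (lP.not_mem_left hρ lQ.mem hPQ) (lR.not_mem_left hτ lQ.mem hQR.symm)
    (off lQ hA hAB.symm) (off lQ hC hBC)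
    (lP.not_mem_left hρ lR.mem hPR) (lQ.not_mem_left hσ lR.mem hQR)
    (off lR hA hAC.symm) (off lR hB hBC.symm)

/-- In characteristic three, if some point of `S` lies on bisecants only, then every light point
with a tangent lies on each bad line. -/
lemma Bad.mem_of_lightAt (hodd : (2 : F) ≠ 0) (h3 : (3 : F) = 0) (hq : 3 < Fintype.card F)
    (hb : Bad S ℓ) (hN : N ∈ S) (h : ∀ L, pgMem N L → LightAt S N L L) (lP : LightAt S P τ θ)
    (hne : τ ≠ θ) : pgMem P ℓ := by
  by_contra hPℓ
  obtain ⟨O, D, hOD, hOS, hlight, hnuc⟩ := hb.exists_concurrent hodd h3 hq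
  obtain ⟨M, hNM, hOM, hDM⟩ := hnuc N hN h
  obtain ⟨A, hA⟩ : ({X ∈ S | pgMem X ℓ} : Finset (PGPoint F)).Nonempty := by
    rw [← Finset.card_pos, ← nsec_coe, hb.1]
    norm_num
  obtain ⟨hAS, hAℓ⟩ := Finset.mem_filter.1 hA
  obtain ⟨σ, hσ, lA⟩ := hb.2 A hAS hAℓ
  obtain ⟨hOP, hDP⟩ := hlight _ _ _ lP hne
  obtain ⟨hOA, hDA⟩ := hlight _ _ _ lA hσ
  have two (L : PGLine F) (hL : pgMem N L) : nsec (S : Set (PGPoint F)) L = 2 := by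
    simpa using (h L hL).sec L hL
  have off {X : PGPoint F} {υ K : PGLine F} (hX : LightAt S X υ K) (hυ : υ ≠ K) (hO : pgMem O υ) :
      ¬ pgMem X M := by
    intro hXM
    have hXO : X ≠ O := by
      rintro rfl
      exact hOS hX.mem
    have h1 := hX.nsec_left hυ
    rw [line_unique hXO hX.mem_left hO hXM hOM, two M hNM] at h1
    omega
  have off' {X : PGPoint F} {υ K : PGLine F} (hX : LightAt S X υ K) (hυ : υ ≠ K) :
      ¬ pgMem N K := by
    intro hNK
    have h1 := hX.nsec_right hυ
    rw [two K hNK] at h1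
    omega
  have hNA : N ≠ A := fun h0 => off lA hσ hOA (h0 ▸ hNM)
  have hNP : N ≠ P := fun h0 => off lP hne hOP (h0 ▸ hNM)
  have hAP : A ≠ P := fun h0 => hPℓ (h0 ▸ hAℓ)
  refine no_light_triangle hodd (h M hNM) lA lP hNA hNP hAP hOM hOA hOP hDM hDA hDP
    (lA.not_mem_left hσ hN hNA.symm) (lP.not_mem_left hne hN hNP.symm)
    (off' lA hσ) (off' lP hne) (off lA hσ hOA) (lP.not_mem_left hne lA.mem hAP.symm)
    (off lA hσ hOA) ?_ (off lP hne hOP) (lA.not_mem_left hσ lP.mem hAP) (off lP hne hOP) hPℓ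
  intro hAθ
  exact hPℓ (lA.eq_right hAθ (lP.nsec_right hne) ▸ lP.mem_right)

/-- At most two points of `S` lie on bisecants only. -/
lemma card_nuclei_le_two (hodd : (2 : F) ≠ 0) {s : Finset (PGPoint F)} (hs : s ⊆ S)
    (h : ∀ N ∈ s, ∀ L, pgMem N L → LightAt S N L L) : #s ≤ 2 := by
  by_contra! hc
  obtain ⟨P, hP, Q, hQ, R, hR, hPQ, hPR, hQR⟩ := Finset.two_lt_card.1 hc
  obtain ⟨L, hPL, hQL⟩ := exists_line hPQ
  have hRL : ¬ pgMem R L := by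
    intro hRL
    have h1 := (h P hP L hPL).sec L hPL
    rcases eq_or_eq_of_nsec_eq_two (by simpa using h1) (hs hP) hPL (hs hQ) hQL hPQ (hs hR) hRL
      with h2 | h2
    · exact hPR h2.symm
    · exact hQR h2.symm
  obtain ⟨e, eR, eP, eQ⟩ := exists_frame (linearIndependent_triple hPQ hPL hQL hRL)
  obtain ⟨A, hA⟩ := exists_hasEq e 1 0 (-1) (by simp)
  obtain ⟨B, hB⟩ := exists_hasEq e 1 (-1) 0 (by simp)
  obtain ⟨C, hC⟩ := exists_hasEq e 0 1 (-1) (by simp)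
  have hO : pgMem (pt e ![1, 1, 1] (by simp)) A ∧ pgMem (pt e ![1, 1, 1] (by simp)) B
      ∧ pgMem (pt e ![1, 1, 1] (by simp)) C := by
    simp [hA.pt_mem, hB.pt_mem, hC.pt_mem]
  refine no_light_triangle hodd (h P hP A (by simp [hA.mem, eP])) (h Q hQ B (by simp [hB.mem, eQ]))
    (h R hR C (by simp [hC.mem, eR])) hPQ hPR hQR hO.1 hO.2.1 hO.2.2 hO.1 hO.2.1 hO.2.2
    ?_ ?_ ?_ ?_ ?_ ?_ ?_ ?_ ?_ ?_ ?_ ?_ <;>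
  simp [hA.mem, hB.mem, hC.mem, eP, eQ, eR]

end Configurations

/-! ### Counting odd-secants -/

section Discharging

variable [Fintype F] {S : Finset (PGPoint F)}

lemma sum_mul_card_pencil (w : PGPoint F → ℤ) (k : ℕ) :
    ∑ P ∈ S, w P * #{L ∈ pencil P | nsec (S : Set (PGPoint F)) L = k}
      = ∑ L : PGLine F with nsec (S : Set (PGPoint F)) L = k, ∑ P ∈ S with pgMem P L, w P := by
  rw [Finset.sum_comm' (t' := S)
    (s' := fun P => {L ∈ pencil P | nsec (S : Set (PGPoint F)) L = k})]
  · refine Finset.sum_congr rfl fun P _ => ?_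
    rw [Finset.sum_const, nsmul_eq_mul, mul_comm]
  · intro L P
    simp only [Finset.mem_filter, Finset.mem_univ, true_and, mem_pencil]
    tauto

lemma sum_tangents : ∑ P ∈ S, (tangents S P : ℤ)
    = #{L : PGLine F | nsec (S : Set (PGPoint F)) L = 1} := by
  have h := sum_mul_card_pencil (S := S) (fun _ => 1) 1
  simp only [one_mul] at h
  simp only [tangents]
  rw [h, Finset.card_eq_sum_ones, Nat.cast_sum]
  refine Finset.sum_congr rfl fun L hL => ?_
  rw [Finset.sum_const, ← nsec_coe, (Finset.mem_filter.1 hL).2]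
  simp

lemma one_le_trisecants (hS : #S = Fintype.card F + 2) {P : PGPoint F} (hP : P ∈ S)
    (h : tangents S P = 1) : 1 ≤ trisecants S P := by
  obtain ⟨τ, θ, hne, hl⟩ := exists_lightAt_of_tangents_eq_one hS hP h
  exact Finset.card_pos.2 ⟨θ, by simp [hl.mem_right, hl.nsec_right hne]⟩

lemma bad_of_tangents_eq_one (hS : #S = Fintype.card F + 2) {ℓ : PGLine F}
    (h3 : nsec (S : Set (PGPoint F)) ℓ = 3)
    (h : ∀ P ∈ S, pgMem P ℓ → tangents S P = 1) : Bad S ℓ := by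
  refine ⟨h3, fun P hP hPℓ => ?_⟩
  obtain ⟨τ, θ, hne, hl⟩ := exists_lightAt_of_tangents_eq_one hS hP (h P hP hPℓ)
  obtain rfl := hl.eq_right hPℓ h3
  exact ⟨τ, hne, hl⟩

/-- The weight of a point in the discharging argument. -/
noncomputable def weight (S : Finset (PGPoint F)) (P : PGPoint F) : ℤ :=
  if tangents S P = 1 then 3 else -1

lemma sum_weight_le (hS : #S = Fintype.card F + 2) {ℓ : PGLine F}
    (h3 : nsec (S : Set (PGPoint F)) ℓ = 3) :
    ∑ P ∈ S with pgMem P ℓ, weight S P ≤ 5 + 4 * if Bad S ℓ then 1 else 0 := by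
  have h := h3
  rw [nsec_coe, Finset.card_eq_three] at h
  obtain ⟨A, B, C, hAB, hAC, hBC, hABC⟩ := h
  rw [hABC, Finset.sum_insert (by simp [hAB, hAC]), Finset.sum_pair hBC]
  by_cases hbad : Bad S ℓ
  · simp only [hbad, if_true, weight]
    split_ifs <;> norm_num
  · simp only [hbad, if_false, weight]
    have hne : ¬ (tangents S A = 1 ∧ tangents S B = 1 ∧ tangents S C = 1) := by
      rintro ⟨hA, hB, hC⟩
      refine hbad (bad_of_tangents_eq_one hS h3 fun P hP hPℓ => ?_)
      have : P ∈ ({A, B, C} : Finset (PGPoint F)) := hABC ▸ Finset.mem_filter.2 ⟨hP, hPℓ⟩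
      simp only [Finset.mem_insert, Finset.mem_singleton] at this
      rcases this with rfl | rfl | rfl <;> assumption
    split_ifs <;> omega

/-- The discharging inequality. -/
lemma discharging (hS : #S = Fintype.card F + 2) :
    8 * (Fintype.card F + 2) ≤ 5 * (#{L : PGLine F | nsec (S : Set (PGPoint F)) L = 1}
      + #{L : PGLine F | nsec (S : Set (PGPoint F)) L = 3})
      + 8 * #{P ∈ S | tangents S P = 0} + 4 * #{L : PGLine F | Bad S L} := by
  have h1 : ∑ P ∈ S, ((8 : ℤ) - 8 * if tangents S P = 0 then 1 else 0)
      ≤ ∑ P ∈ S, (5 * (tangents S P : ℤ) + weight S P * trisecants S P) := by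
    refine Finset.sum_le_sum fun P hP => ?_
    have h2 := trisecants_le_tangents hS hP
    rw [weight]
    by_cases h0 : tangents S P = 0
    · simp only [h0, if_true] at h2 ⊢
      simp at h2
      simp [h2]
    · by_cases h1 : tangents S P = 1
      · have := one_le_trisecants hS hP h1
        simp only [h1, if_true]
        simp
        omega
      · simp only [h0, h1, if_false]
        omega
  have h2 : ∑ L : PGLine F with nsec (S : Set (PGPoint F)) L = 3, ∑ P ∈ S with pgMem P L, weight S P
      ≤ ∑ L : PGLine F with nsec (S : Set (PGPoint F)) L = 3,
        ((5 : ℤ) + 4 * if Bad S L then 1 else 0) :=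
    Finset.sum_le_sum fun L hL => sum_weight_le hS (Finset.mem_filter.1 hL).2
  have h3 : #{L ∈ ({L | nsec (S : Set (PGPoint F)) L = 3} : Finset (PGLine F)) | Bad S L}
      ≤ #{L : PGLine F | Bad S L} :=
    Finset.card_le_card (Finset.filter_subset_filter _ (Finset.subset_univ _))
  rw [← sum_mul_card_pencil] at h2
  rw [Finset.sum_add_distrib, ← Finset.mul_sum, sum_tangents, Finset.sum_sub_distrib,
    ← Finset.mul_sum, Finset.sum_const, hS, Finset.sum_boole] at h1
  rw [Finset.sum_add_distrib, ← Finset.mul_sum, Finset.sum_const, Finset.sum_boole] at h2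
  simp only [trisecants] at h1
  simp only [nsmul_eq_mul] at h1 h2
  push_cast at h1
  omega

lemma two_mul_le (hS : #S = Fintype.card F + 2) :
    2 * (Fintype.card F + 2) ≤ #{L : PGLine F | nsec (S : Set (PGPoint F)) L = 1}
      + #{P ∈ S | tangents S P = 1} + 2 * #{P ∈ S | tangents S P = 0} := by
  have h1 : ∑ P ∈ S, (2 : ℤ) ≤ ∑ P ∈ S, ((tangents S P : ℤ) + (if tangents S P = 1 then 1 else 0)
      + 2 * if tangents S P = 0 then 1 else 0) := by
    refine Finset.sum_le_sum fun P _ => ?_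
    split_ifs <;> omega
  rw [Finset.sum_add_distrib, Finset.sum_add_distrib, ← Finset.mul_sum, sum_tangents,
    Finset.sum_const, hS, Finset.sum_boole, Finset.sum_boole, nsmul_eq_mul] at h1
  push_cast at h1
  omega

theorem eight_mul_card_le (hodd : (2 : F) ≠ 0) (hq : 4 < Fintype.card F)
    (hS : #S = Fintype.card F + 2) :
    8 * Fintype.card F ≤ 5 * (#{L : PGLine F | nsec (S : Set (PGPoint F)) L = 1}
      + #{L : PGLine F | nsec (S : Set (PGPoint F)) L = 3}) := by
  have hq3 : 3 < Fintype.card F := by omega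
  have hdis := discharging hS
  have hnuc : ∀ N ∈ ({P ∈ S | tangents S P = 0} : Finset (PGPoint F)), ∀ L, pgMem N L →
      LightAt S N L L := fun N hN L hL =>
    lightAt_of_tangents_eq_zero hS (Finset.mem_filter.1 hN).1 (Finset.mem_filter.1 hN).2 hL
  have hn : #{P ∈ S | tangents S P = 0} ≤ 2 :=
    card_nuclei_le_two hodd (Finset.filter_subset _ _) hnuc
  rcases Finset.eq_empty_or_nonempty ({L | Bad S L} : Finset (PGLine F)) with h0 | ⟨ℓ, hℓ⟩
  · rw [h0, Finset.card_empty] at hdis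
    omega
  have hb : Bad S ℓ := (Finset.mem_filter.1 hℓ).2
  by_cases h3 : (3 : F) = 0
  · have hc := card_bad_le_two (S := S) hodd h3 hq3
    rcases Finset.eq_empty_or_nonempty ({P ∈ S | tangents S P = 0} : Finset (PGPoint F))
      with h0 | ⟨N, hN⟩
    · rw [h0, Finset.card_empty] at hdis
      omega
    have h1 : #{P ∈ S | tangents S P = 1} ≤ 3 := by
      rw [← hb.1, nsec_coe]
      refine Finset.card_le_card fun P hP => ?_
      obtain ⟨hPS, hP⟩ := Finset.mem_filter.1 hP
      obtain ⟨τ, θ, hne, hl⟩ := exists_lightAt_of_tangents_eq_one hS hPS hP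
      exact Finset.mem_filter.2 ⟨hPS, hb.mem_of_lightAt hodd h3 hq3 (Finset.mem_filter.1 hN).1
        (hnuc N hN) hl hne⟩
    have h2 : 1 ≤ #{L : PGLine F | nsec (S : Set (PGPoint F)) L = 3} :=
      Finset.card_pos.2 ⟨ℓ, by simp [hb.1]⟩
    have := two_mul_le hS
    omega
  · have hc := card_bad_le_three (S := S) h3 hq3
    have h0 : ({P ∈ S | tangents S P = 0} : Finset (PGPoint F)) = ∅ := by
      rw [Finset.eq_empty_iff_forall_notMem]
      exact fun N hN => not_forall_lightAt_of_bad hodd h3 hq3 hb (Finset.mem_filter.1 hN).1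
        (hnuc N hN)
    rw [h0, Finset.card_empty] at hdis
    omega

lemma card_add_card_le_ncard_odd : #{L : PGLine F | nsec (S : Set (PGPoint F)) L = 1}
    + #{L : PGLine F | nsec (S : Set (PGPoint F)) L = 3}
      ≤ {L : PGLine F | Odd (nsec (S : Set (PGPoint F)) L)}.ncard := by
  rw [← Finset.card_union_of_disjoint, ← Set.ncard_coe_finset]
  · refine Set.ncard_le_ncard (fun L hL => ?_) (Set.toFinite _)
    simp only [Finset.mem_coe, Finset.mem_union, Finset.mem_filter, Finset.mem_univ,
      true_and] at hL
    rw [Set.mem_ofPred_eq]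
    rcases hL with h | h
    · exact h ▸ odd_one
    · exact h ▸ (by decide : Odd 3)
  · rw [Finset.disjoint_filter]
    intro L _ h
    omega

end Discharging

end OddSecants

/-- Let `S` be a point set of size `q + 2` in `PG(2,q)`, `q` odd, `q > 3`.  Then the number of
odd-secants of `S` is at least `(8/5)·q`. -/
theorem stmt_18 {F : Type*} [Field F] [Fintype F] (q : ℕ) (hq : Fintype.card F = q)
    (hqodd : Odd q) (hq3 : 3 < q)
    (S : Set (PGPoint F)) (hsize : S.ncard = q + 2) :
    (8 / 5 : ℚ) * (q : ℚ) ≤ ({L : PGLine F | Odd (nsec S L)}.ncard : ℚ) := by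
  subst hq
  have hq4 : 4 < Fintype.card F := by
    obtain ⟨k, hk⟩ := hqodd
    omega
  have hodd : (2 : F) ≠ 0 := Ring.two_ne_zero fun h =>
    Nat.not_even_iff_odd.2 hqodd (Nat.even_iff.2 (FiniteField.even_card_of_char_two h))
  obtain ⟨T, rfl⟩ := (Set.toFinite S).exists_finset_coe
  rw [Set.ncard_coe_finset] at hsize
  have h1 := OddSecants.eight_mul_card_le hodd hq4 hsize
  have h2 := OddSecants.card_add_card_le_ncard_odd (S := T)
  have h3 : (8 : ℚ) * Fintype.card F
      ≤ 5 * {L : PGLine F | Odd (nsec (T : Set (PGPoint F)) L)}.ncard := by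
    exact_mod_cast h1.trans (Nat.mul_le_mul_left 5 h2)
  linarith
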